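/- arXiv:2402.02575 — 2 statements merged into one kernel-verified Lean document; each statement's English description precedes it below -/
import Mathlib

section
/- For every ε > 0 there exists a measurable map f : X → Fin 5 such that for μ-a.e. x ∈ X one has f(s • x) ≠ f(x) for every s ∈ S, and μ({x : f(x) = 4}) < ε. In particular, the Bernoulli shift of F_3 has measurable chromatic number at most 5. -/
open MeasureTheory

/-!
Let `F` be the free group on `d` generators, acting essentially freely, and give the measurable
labellings the metric of disagreement. The energy of a labelling, its density of monochromatic
edges, is continuous. By Ekeland's variational principle a multiple `m * energy` has a point `f`
that no other labelling beats by more than its distance to `f`. Freeness lets one execute a finite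
list of moves simultaneously at a positive density of disjoint places, so for such an `f` almost no
orbit admits a list of at most `m` moves that decreases the number of monochromatic edges: its
colouring is `m`-stable.

With `d + 1` colours, stability forces small energy. The least cost of recolouring a branch of the
tree to depth `n`, as a function of the colour intended for the root, has at most one exceptional
value, and counting exceptional values shows that the mean of its minimum over colours drops by the
energy each time `n` increases. Stability bounds this mean below by `-2d`, so `n * energy ≤ 2d`.

With `d + 2` colours the energy can be made zero at a small price. Minimise `2K√energy` plus the
distance from the given labelling, where `K = d + 3`. The minimiser is `m`-stable as long as
`m√energy ≤ K`. In a stable colouring a monochromatic edge can be pushed from a vertex into at least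
three other edges there, whereas no vertex ever has two edges into which one can be pushed. After
`k` steps this gives `3 ^ k * energy ≤ 1`, so `(2k + 3)√energy ≤ 3`, which keeps the minimiser
stable enough for the next step. Hence `(2k + 1)√energy ≤ K` for all `k`, and the energy vanishes.
Starting from a labelling by `d + 1` colours of energy `E`, the extra colour is used only where the
labelling changes, on a set of measure at most `2K√E`.
-/

namespace TreeColoring

section Ekeland

variable {M : Type*} [PseudoMetricSpace M]

/-- The points that improve on `f` by at least their distance to `f`: the partial order of
Ekeland's variational principle. -/
def improvements (Φ : M → ℝ) (f : M) : Set M := {k | Φ k + dist f k ≤ Φ f}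

theorem improvements_subset {Φ : M → ℝ} {f k : M} (hk : k ∈ improvements Φ f) :
    improvements Φ k ⊆ improvements Φ f := fun h (hh : Φ h + dist k h ≤ Φ k) => by
  have hk : Φ k + dist f k ≤ Φ f := hk
  have := dist_triangle f k h
  exact show Φ h + dist f h ≤ Φ f by linarith

theorem isClosed_improvements {Φ : M → ℝ} (hΦ : LowerSemicontinuous Φ) (f : M) :
    IsClosed (improvements Φ f) :=
  (hΦ.add (continuous_const.dist continuous_id).lowerSemicontinuous).isClosed_preimage (Φ f)

theorem exists_mem_improvements_le_add {Φ : M → ℝ} (hbdd : BddBelow (Set.range Φ)) (f : M)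
    {δ : ℝ} (hδ : 0 < δ) : ∃ k ∈ improvements Φ f, ∀ h ∈ improvements Φ f, Φ k ≤ Φ h + δ := by
  have hne : (Φ '' improvements Φ f).Nonempty := ⟨Φ f, f, by simp [improvements], rfl⟩
  obtain ⟨_, ⟨k, hk, rfl⟩, hlt⟩ := exists_lt_of_csInf_lt hne (lt_add_of_pos_right _ hδ)
  refine ⟨k, hk, fun h hh => hlt.le.trans ?_⟩
  gcongr
  exact csInf_le (hbdd.mono (Set.image_subset_range _ _)) ⟨h, hh, rfl⟩

theorem exists_forall_le_add_dist [CompleteSpace M] {Φ : M → ℝ} (hΦ : LowerSemicontinuous Φ)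
    (hbdd : BddBelow (Set.range Φ)) (f₀ : M) :
    ∃ g, Φ g + dist f₀ g ≤ Φ f₀ ∧ ∀ h, Φ g ≤ Φ h + dist g h := by
  choose next hnext hmin using fun (n : ℕ) (f : M) =>
    exists_mem_improvements_le_add hbdd f (δ := 1 / 2 / 2 ^ n) (by positivity)
  let F : ℕ → M := fun n => Nat.rec f₀ next n
  have hF : Antitone fun n => improvements Φ (F n) :=
    antitone_nat_of_succ_le fun n => improvements_subset (hnext n (F n))
  have hself (n) : F n ∈ improvements Φ (F n) := by simp [improvements]
  have hcauchy : CauchySeq F := by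
    refine (cauchySeq_shift 1).1 (cauchySeq_of_le_geometric_two (C := 1) fun n => ?_)
    have hmem : Φ (F (n + 2)) + dist (F (n + 1)) (F (n + 2)) ≤ Φ (F (n + 1)) := hnext _ _
    have := hmin n (F n) (F (n + 2)) (hF (by lia : n ≤ n + 2) (hself (n + 2)))
    change dist (F (n + 1)) (F (n + 2)) ≤ _
    change Φ (F (n + 1)) ≤ _ at this
    linarith
  obtain ⟨g, hg⟩ := cauchySeq_tendsto_of_complete hcauchy
  have hmem (n) : g ∈ improvements Φ (F n) :=
    (isClosed_improvements hΦ _).mem_of_tendsto hg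
      (Filter.eventually_atTop.2 ⟨n, fun m hm => hF hm (hself m)⟩)
  refine ⟨g, hmem 0, fun h => ?_⟩
  by_cases hh : h ∈ improvements Φ g
  · have hle (n : ℕ) : Φ g ≤ Φ h + 1 / 2 / 2 ^ n := by
      have : Φ g + dist (F (n + 1)) g ≤ Φ (F (n + 1)) := hmem (n + 1)
      have := hmin n (F n) h (improvements_subset (hmem n) hh)
      change Φ (F (n + 1)) ≤ _ at this
      linarith [dist_nonneg (x := F (n + 1)) (y := g)]
    have hlim : Filter.Tendsto (fun n : ℕ => Φ h + 1 / 2 / 2 ^ n) .atTop (nhds (Φ h + 0)) :=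
      tendsto_const_nhds.add
        (tendsto_const_nhds.div_atTop (tendsto_pow_atTop_atTop_of_one_lt one_lt_two))
    linarith [ge_of_tendsto' hlim hle, dist_nonneg (x := g) (y := h)]
  · exact (not_le.1 hh).le

end Ekeland

section Labeling

variable {X A : Type*} [MeasurableSpace X] [MeasurableSpace A]

/-- Measurable labellings of `X` by `A`. The measure is a parameter of the type because it
determines the metric, the measure of the set of disagreement. -/
def Labeling (_μ : Measure X) (A : Type*) [MeasurableSpace A] : Type _ :=
  {f : X → A // Measurable f}

variable {μ : Measure X}

instance : CoeFun (Labeling μ A) fun _ => X → A := ⟨Subtype.val⟩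

theorem Labeling.measurable (f : Labeling μ A) : Measurable f := f.2

variable [IsFiniteMeasure μ]

noncomputable instance : PseudoMetricSpace (Labeling μ A) where
  dist f g := μ.real {x | f x ≠ g x}
  dist_self f := by simp
  dist_comm f g := by simp only [ne_comm]
  dist_triangle f g h := by
    refine (measureReal_mono fun x hx => ?_).trans (measureReal_union_le _ _)
    by_cases hfg : f x = g x
    · exact .inr fun hgh => hx (hfg.trans hgh)
    · exact .inl hfg

theorem Labeling.dist_def (f g : Labeling μ A) : dist f g = μ.real {x | f x ≠ g x} := rfl

theorem ae_eventually_const_of_dist_le {f : ℕ → Labeling μ A}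
    (hf : ∀ n, dist (f n) (f (n + 1)) ≤ (1 / 2) ^ n) :
    ∀ᵐ x ∂μ, ∃ a, ∀ᶠ n in .atTop, f n x = a := by
  have hsum : ∑' n, μ {x | f n x ≠ f (n + 1) x} ≠ ⊤ := by
    have hreal (n) : μ {x | f n x ≠ f (n + 1) x} = .ofReal (dist (f n) (f (n + 1))) := by
      rw [Labeling.dist_def, ofReal_measureReal]
    simp_rw [hreal]
    have hdist : Summable fun n => dist (f n) (f (n + 1)) :=
      .of_nonneg_of_le (fun _ => dist_nonneg) hf summable_geometric_two
    exact hdist.tsum_ofReal_ne_top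
  filter_upwards [ae_eventually_notMem hsum] with x hx
  obtain ⟨N, hN⟩ := Filter.eventually_atTop.1 hx
  refine ⟨f N x, Filter.eventually_atTop.2 ⟨N, fun n hn => ?_⟩⟩
  induction n, hn using Nat.le_induction with
  | base => rfl
  | succ n hn ih => exact (not_not.1 (hN n hn)).symm.trans ih

variable [Countable A] [TopologicalSpace A] [DiscreteTopology A] [BorelSpace A]

theorem tendsto_measureReal_ne {f : ℕ → X → A} {g : X → A} (hf : ∀ n, Measurable (f n))
    (hg : Measurable g) (hfg : ∀ᵐ x ∂μ, ∀ᶠ n in .atTop, f n x = g x) :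
    Filter.Tendsto (fun n => μ.real {x | f n x ≠ g x}) .atTop (nhds 0) := by
  have hlim : Filter.Tendsto (fun n => μ {x | f n x ≠ g x}) .atTop (nhds (μ ∅)) :=
    tendsto_measure_of_ae_tendsto_indicator .atTop .empty
      (fun n => (measurableSet_eq_fun (hf n) hg).compl) .univ (measure_ne_top _ _)
      (.of_forall fun _ => Set.subset_univ _) (by
        filter_upwards [hfg] with x hx
        filter_upwards [hx] with n hn
        simp [hn])
  rw [measure_empty] at hlim
  exact (ENNReal.tendsto_toReal ENNReal.zero_ne_top).comp hlim

instance : CompleteSpace (Labeling μ A) := by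
  refine Metric.complete_of_convergent_controlled_sequences (fun n => (1 / 2) ^ n)
    (fun n => by positivity) fun f hf => ?_
  have hconst := ae_eventually_const_of_dist_le fun n => (hf n n (n + 1) le_rfl n.le_succ).le
  obtain ⟨g, hg, hlim⟩ := measurable_limit_of_tendsto_metrizable_ae
    (fun n => (f n).measurable.aemeasurable) (hconst.mono fun x ⟨a, ha⟩ =>
      ⟨a, tendsto_const_nhds.congr' (ha.mono fun _ => Eq.symm)⟩)
  refine ⟨⟨g, hg⟩, tendsto_iff_dist_tendsto_zero.2 ?_⟩
  exact tendsto_measureReal_ne (fun n => (f n).measurable) hg (hlim.mono fun x hx =>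
    hx (show {g x} ∈ nhds (g x) by simp))

end Labeling

local notation "𝟙[" p "]" => ite p (1 : ℤ) 0

section Combinatorics

theorem iverson_nonneg (p : Prop) [Decidable p] : 0 ≤ 𝟙[p] := by split_ifs <;> simp

theorem iverson_le_one (p : Prop) [Decidable p] : 𝟙[p] ≤ 1 := by split_ifs <;> simp

variable {A ι : Type*}

theorem exists_ne_eq_iInf_of_iInf_pos [Fintype A] [Nonempty A] {κ : A → ℤ} {d : ℕ}
    (hcard : d + 2 ≤ 2 * Fintype.card A) (hsum : ∑ i, κ i ≤ d) (hpos : 0 < ⨅ i, κ i) :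
    ∃ i j, i ≠ j ∧ κ i = ⨅ i, κ i ∧ κ j = ⨅ i, κ i := by
  classical
  obtain ⟨i, hi⟩ := exists_eq_ciInf_of_finite (f := κ)
  by_contra! hne
  have hlarge : ∀ j ∈ Finset.univ.erase i, 2 ≤ κ j := fun j hj => by
    have := (Finite.ciInf_le κ j).lt_of_ne (hne i j (Finset.ne_of_mem_erase hj).symm hi).symm
    lia
  have hge := Finset.card_nsmul_le_sum _ _ _ hlarge
  rw [Finset.card_erase_of_mem (Finset.mem_univ i), Finset.card_univ] at hge
  have := Finset.add_sum_erase Finset.univ κ (Finset.mem_univ i)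
  have hA : 1 ≤ Fintype.card A := Fintype.card_pos
  simp only [nsmul_eq_mul, Nat.cast_sub hA] at hge
  lia

variable [DecidableEq A]

theorem iInf_iverson_eq_zero [Finite A] [Nontrivial A] (u : Option A) :
    ⨅ i, 𝟙[u = some i] = 0 := by
  obtain ⟨i, hi⟩ : ∃ i, u ≠ some i := by
    rcases u with _ | a
    · simp
    · exact (exists_ne a).imp fun i hi => by simpa using hi.symm
  refine le_antisymm ((Finite.ciInf_le _ i).trans (by simp [hi])) ?_
  exact le_ciInf fun i => iverson_nonneg _

theorem exists_iInf_add_iverson_eq [Finite A] [Nonempty A] (k : A → ℤ) :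
    ∃ u : Option A, ∀ ℓ, ⨅ i, (k i + 𝟙[i = ℓ]) = (⨅ i, k i) + 𝟙[u = some ℓ] := by
  obtain ⟨i₀, hi₀⟩ := exists_eq_ciInf_of_finite (f := k)
  have hmin (i) : k i₀ ≤ k i := hi₀ ▸ Finite.ciInf_le k i
  have hlower (ℓ) : k i₀ ≤ ⨅ i, (k i + 𝟙[i = ℓ]) :=
    le_ciInf fun i => by linarith [hmin i, iverson_nonneg (i = ℓ)]
  have hupper (ℓ i) : ⨅ i, (k i + 𝟙[i = ℓ]) ≤ k i + 𝟙[i = ℓ] := Finite.ciInf_le _ i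
  rw [← hi₀]
  by_cases hunique : ∃ j, j ≠ i₀ ∧ k j = k i₀
  · obtain ⟨j, hj, hkj⟩ := hunique
    refine ⟨none, fun ℓ => le_antisymm ?_ (by simpa using hlower ℓ)⟩
    by_cases hℓ : i₀ = ℓ
    · simpa [← hℓ, hj, hkj] using hupper ℓ j
    · simpa [hℓ] using hupper ℓ i₀
  · refine ⟨some i₀, fun ℓ => ?_⟩
    by_cases hℓ : i₀ = ℓ
    · subst hℓ
      refine le_antisymm (by simpa using hupper i₀ i₀) (le_ciInf fun i => ?_)
      rcases eq_or_ne i i₀ with rfl | hi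
      · simp
      · have := (hmin i).lt_of_ne fun h => hunique ⟨i, hi, h.symm⟩
        simpa [hi] using this
    · exact le_antisymm (by simpa [hℓ] using hupper ℓ i₀) (by simpa [hℓ] using hlower ℓ)

variable [Fintype A] [Fintype ι]

theorem sum_sum_iverson_le_card (u : ι → Option A) :
    ∑ i, ∑ r, 𝟙[u r = some i] ≤ Fintype.card ι := by
  rw [Finset.sum_comm]
  refine (Finset.sum_le_card_nsmul _ _ 1 fun r _ => ?_).trans (by simp)
  rcases u r with _ | a <;> simp

variable [DecidableEq ι]

theorem sum_iInf_sum_erase_iverson_le [Nonempty A] (u : ι → Option A)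
    (hcard : Fintype.card ι + 2 ≤ 2 * Fintype.card A) :
    ∑ s, ⨅ i, ∑ r ∈ Finset.univ.erase s, 𝟙[u r = some i]
      ≤ (Fintype.card ι - 2) * ⨅ i, ∑ r, 𝟙[u r = some i] := by
  set κ : A → ℤ := fun i => ∑ r, 𝟙[u r = some i] with hκ
  have herase (s i) : ∑ r ∈ Finset.univ.erase s, 𝟙[u r = some i] = κ i - 𝟙[u s = some i] :=
    eq_sub_of_add_eq' (Finset.add_sum_erase _ (fun r => 𝟙[u r = some i]) (Finset.mem_univ s))
  have hle (s i) : ⨅ i, (κ i - 𝟙[u s = some i]) ≤ κ i - 𝟙[u s = some i] := Finite.ciInf_le _ i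
  simp_rw [herase]
  have hnonneg : 0 ≤ ⨅ i, κ i :=
    le_ciInf fun i => Finset.sum_nonneg fun r _ => iverson_nonneg (u r = some i)
  rcases hnonneg.eq_or_lt with hzero | hpos
  · obtain ⟨i, hi⟩ := exists_eq_ciInf_of_finite (f := κ)
    rw [← hzero, mul_zero]
    exact Finset.sum_nonpos fun s _ => by linarith [hle s i, iverson_nonneg (u s = some i)]
  · obtain ⟨i, j, hij, hi, hj⟩ :=
      exists_ne_eq_iInf_of_iInf_pos (κ := κ) hcard (sum_sum_iverson_le_card u) hpos
    have hbound (s) : ⨅ i, (κ i - 𝟙[u s = some i])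
        ≤ (⨅ i, κ i) - 𝟙[u s = some i] - 𝟙[u s = some j] := by
      by_cases hs : u s = some i
      · simpa [hs, hij, hi] using hle s i
      · simpa [hs, hj] using hle s j
    calc _ ≤ ∑ s, ((⨅ i, κ i) - 𝟙[u s = some i] - 𝟙[u s = some j]) :=
          Finset.sum_le_sum fun s _ => hbound s
      _ = Fintype.card ι * (⨅ i, κ i) - κ i - κ j := by
          simp only [Finset.sum_sub_distrib, Finset.sum_const, Finset.card_univ, nsmul_eq_mul, hκ]
      _ = _ := by rw [hi, hj]; ring

theorem sum_iInf_sum_erase_le [Nontrivial A] (N : ι → A → ℤ) (a : A)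
    (hι : 2 ≤ Fintype.card ι) (hcard : Fintype.card ι + 2 ≤ 2 * Fintype.card A)
    (hNa : ∀ t, N t a ≤ 0)
    (hN : ∀ t, ∃ (b : ℤ) (u : Option A), ∀ ℓ, N t ℓ = b + 𝟙[u = some ℓ]) :
    ∑ s, ⨅ i, ∑ r ∈ Finset.univ.erase s, N r i ≤ ∑ t, ⨅ i, N t i := by
  choose b u hbu using hN
  have hadd (k : A → ℤ) (m : ℤ) : ⨅ i, (m + k i) = m + ⨅ i, k i :=
    (add_ciInf (Set.finite_range k).bddBelow m).symm
  have hiInf (t) : ⨅ i, N t i = b t := by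
    simp only [hbu, hadd, iInf_iverson_eq_zero, add_zero]
  have herase (s) : ⨅ i, ∑ r ∈ Finset.univ.erase s, N r i
      = (∑ r, b r - b s) + ⨅ i, ∑ r ∈ Finset.univ.erase s, 𝟙[u r = some i] := by
    simp only [hbu, Finset.sum_add_distrib, hadd, ← Finset.sum_erase_eq_sub (Finset.mem_univ s)]
  have ha : (⨅ i, ∑ r, 𝟙[u r = some i]) + ∑ r, b r ≤ 0 := by
    refine (add_le_add_left (Finite.ciInf_le _ a) _).trans ?_
    rw [← Finset.sum_add_distrib]
    exact Finset.sum_nonpos fun t _ => by linarith [hbu t a, hNa t]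
  have hcomb := sum_iInf_sum_erase_iverson_le u hcard
  simp_rw [herase, hiInf]
  rw [Finset.sum_add_distrib, Finset.sum_sub_distrib, Finset.sum_const, Finset.card_univ,
    nsmul_eq_mul]
  have hι' : (2 : ℤ) ≤ Fintype.card ι := mod_cast hι
  linarith [mul_nonneg (sub_nonneg.2 hι') (neg_nonneg.2 ha)]

theorem three_le_card_filter_unique (v : ι → A) (a : A) (t : ι)
    (hcard : Fintype.card ι + 4 ≤ 2 * Fintype.card A) (hv : ∀ j ≠ a, ∃ r ≠ t, v r = j) :
    3 ≤ Finset.card {s | s ≠ t ∧ v s ≠ a ∧ ∀ r ≠ t, v r = v s → r = s} := by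
  set κ : A → ℕ := fun j => Finset.card {r ∈ Finset.univ.erase t | v r = j}
  have hκpos : ∀ j ∈ Finset.univ.erase a, 1 ≤ κ j := fun j hj => by
    obtain ⟨r, hrt, hr⟩ := hv j (Finset.ne_of_mem_erase hj)
    exact Finset.card_pos.2 ⟨r, by simp [hrt, hr]⟩
  have hκsum : ∑ j ∈ Finset.univ.erase a, κ j ≤ Fintype.card ι - 1 := by
    rw [Finset.sum_card_fiberwise_eq_card_filter]
    exact (Finset.card_filter_le _ _).trans (by simp)
  have honce : 2 * (Fintype.card A - 1) ≤
      Finset.card {j ∈ Finset.univ.erase a | κ j = 1} + ∑ j ∈ Finset.univ.erase a, κ j := by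
    rw [Finset.card_filter, ← Finset.sum_add_distrib, mul_comm, ← smul_eq_mul,
      ← Finset.card_univ, ← Finset.card_erase_of_mem (Finset.mem_univ a)]
    refine Finset.card_nsmul_le_sum _ _ _ fun j hj => ?_
    have := hκpos j hj
    split_ifs <;> lia
  have himage : ({j ∈ Finset.univ.erase a | κ j = 1} : Finset A) ⊆
      Finset.image v {s | s ≠ t ∧ v s ≠ a ∧ ∀ r ≠ t, v r = v s → r = s} := fun j hj => by
    obtain ⟨hja, hj⟩ := Finset.mem_filter.1 hj
    obtain ⟨s, hs⟩ := Finset.card_eq_one.1 hj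
    have hmem (r) : (r ≠ t ∧ v r = j) ↔ r = s := by simpa using Finset.ext_iff.1 hs r
    obtain ⟨hst, rfl⟩ := (hmem s).2 rfl
    refine Finset.mem_image.2 ⟨s, ?_, rfl⟩
    simpa [hst] using ⟨Finset.ne_of_mem_erase hja, fun r hrt hr => (hmem r).1 ⟨hrt, hr⟩⟩
  have := (Finset.card_le_card himage).trans Finset.card_image_le
  have : 0 < Fintype.card ι := Fintype.card_pos_iff.2 ⟨t⟩
  lia

end Combinatorics

section Branches

variable {α : Type*}

/-- The letters of the alphabet of `FreeGroup α`, in Mathlib's encoding: `(a, true)` stands for the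
generator `a` and `(a, false)` for its inverse. -/
abbrev Letter (α : Type*) := α × Bool

/-- The letter `t` as a group element. The neighbours of `g` in the tree are the `gen t * g`. -/
def gen (t : Letter α) : FreeGroup α := FreeGroup.mk [t]

/-- The inverse letter. -/
def opp (t : Letter α) : Letter α := (t.1, !t.2)

@[simp] theorem opp_opp (t : Letter α) : opp (opp t) = t := by simp [opp]

theorem opp_bijective : Function.Bijective (opp : Letter α → Letter α) :=
  (show Function.Involutive opp from opp_opp).bijective

theorem gen_opp (t : Letter α) : gen (opp t) = (gen t)⁻¹ := by
  simp [gen, opp, FreeGroup.inv_mk, FreeGroup.invRev]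

variable [DecidableEq α]

/-- The elements whose reduced word ends with `t`: the vertices of the tree that are separated from
the root `1` by its neighbour `gen t`. -/
def branch (t : Letter α) : Set (FreeGroup α) := {g | g.toWord.getLast? = some t}

theorem one_notMem_branch (t : Letter α) : (1 : FreeGroup α) ∉ branch t := by simp [branch]

theorem gen_mem_branch (t : Letter α) : gen t ∈ branch t := by
  simp [branch, gen, FreeGroup.toWord_mk]

theorem eq_of_mem_branch {s t : Letter α} {g : FreeGroup α} (hs : g ∈ branch s)
    (ht : g ∈ branch t) : s = t :=
  Option.some.inj (Eq.trans (Eq.symm hs) ht)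

theorem gen_mul_mem_branch {s t : Letter α} {g : FreeGroup α} (hg : g ∈ branch t) :
    gen s * g ∈ branch t ∨ gen s * g = 1 := by
  have hword : (gen s * g).toWord = FreeGroup.reduce (s :: g.toWord) := by
    rw [FreeGroup.toWord_mul, gen, FreeGroup.toWord_mk, FreeGroup.reduce_singleton]
    rfl
  rw [FreeGroup.reduce.cons, FreeGroup.reduce_toWord] at hword
  rw [← FreeGroup.toWord_eq_nil_iff]
  simp only [branch, Set.mem_ofPred_eq] at hg ⊢
  rw [hword]
  generalize g.toWord = w at hg ⊢
  match w with
  | [a] => dsimp only; split_ifs <;> simp_all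
  | a :: b :: w => dsimp only; split_ifs <;> simp_all

theorem mul_gen_mem_branch {t : Letter α} {g : FreeGroup α} (hg : g ∉ branch (opp t)) :
    g * gen t ∈ branch t := by
  have hred : FreeGroup.IsReduced (g.toWord ++ [t]) := by
    refine List.isChain_append.2 ⟨FreeGroup.isReduced_toWord, by simp, ?_⟩
    rintro ⟨a, b⟩ hlast _ ⟨⟩ (rfl : a = t.1)
    by_contra hne
    exact hg (hlast.trans (congrArg some (Prod.ext rfl (Bool.eq_not.2 hne))))
  simp [branch, FreeGroup.toWord_mul, gen, FreeGroup.toWord_mk, hred.reduce_eq]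

end Branches

section Recoloring

variable {α A : Type*} [DecidableEq α]

/-- The colouring obtained from `c` by executing a list of moves, first to last; the move `(g, a)`
gives the vertex `g` the colour `a`. -/
def recolor (c : FreeGroup α → A) : List (FreeGroup α × A) → FreeGroup α → A
  | [] => c
  | p :: l => recolor (Function.update c p.1 p.2) l

/-- The colouring seen from the vertex `u`. -/
def translate (u : FreeGroup α) (c : FreeGroup α → A) : FreeGroup α → A := fun g => c (g * u)

/-- The moves at the vertices seen from `u`, as moves of the original colouring. -/
def translateMoves (u : FreeGroup α) (l : List (FreeGroup α × A)) : List (FreeGroup α × A) :=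
  l.map fun p => (p.1 * u, p.2)

theorem recolor_append (c : FreeGroup α → A) (l l' : List (FreeGroup α × A)) :
    recolor c (l ++ l') = recolor (recolor c l) l' := by
  induction l generalizing c with
  | nil => rfl
  | cons p _ ih => exact ih _

theorem recolor_apply_of_notMem {c : FreeGroup α → A} {l : List (FreeGroup α × A)}
    {g : FreeGroup α} (hg : ∀ p ∈ l, p.1 ≠ g) : recolor c l g = c g := by
  induction l generalizing c with
  | nil => rfl
  | cons p l ih =>
    rw [List.forall_mem_cons] at hg
    rw [recolor, ih hg.2, Function.update_of_ne hg.1.symm]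

theorem update_eqOn {c c' : FreeGroup α → A} {Q : Set (FreeGroup α)} (hc : Set.EqOn c c' Q)
    (p : FreeGroup α × A) :
    Set.EqOn (Function.update c p.1 p.2) (Function.update c' p.1 p.2) Q := fun g hg => by
  rcases eq_or_ne g p.1 with rfl | hne
  · simp
  · simp only [Function.update_of_ne hne, hc hg]

theorem recolor_eqOn {c c' : FreeGroup α → A} {Q : Set (FreeGroup α)} (hc : Set.EqOn c c' Q)
    (l : List (FreeGroup α × A)) : Set.EqOn (recolor c l) (recolor c' l) Q := by
  induction l generalizing c c' with
  | nil => exact hc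
  | cons p _ ih => exact ih (update_eqOn hc p)

theorem update_translate (u : FreeGroup α) (c : FreeGroup α → A) (p : FreeGroup α × A) :
    Function.update (translate u c) p.1 p.2 = translate u (Function.update c (p.1 * u) p.2) := by
  funext g
  simp [translate, Function.update_apply]

theorem recolor_translate (u : FreeGroup α) (c : FreeGroup α → A) (l : List (FreeGroup α × A)) :
    recolor (translate u c) l = translate u (recolor c (translateMoves u l)) := by
  induction l generalizing c with
  | nil => rfl
  | cons p l ih => rw [recolor, update_translate, ih]; rfl

variable [Fintype α] [DecidableEq A]

/-- The change of the number of monochromatic edges when the vertex `g` is given the colour `a`. -/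
def moveCost (c : FreeGroup α → A) (g : FreeGroup α) (a : A) : ℤ :=
  ∑ t : Letter α, (𝟙[c (gen t * g) = a] - 𝟙[c (gen t * g) = c g])

/-- The change of the number of monochromatic edges when a list of moves is executed. -/
def cost (c : FreeGroup α → A) : List (FreeGroup α × A) → ℤ
  | [] => 0
  | p :: l => moveCost c p.1 p.2 + cost (Function.update c p.1 p.2) l

/-- No list of at most `m` moves decreases the number of monochromatic edges. -/
def IsStable (m : ℕ) (c : FreeGroup α → A) : Prop :=
  ∀ l : List (FreeGroup α × A), l.length ≤ m → 0 ≤ cost c l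

theorem IsStable.mono {m n : ℕ} {c : FreeGroup α → A} (hmn : m ≤ n) (hc : IsStable n c) :
    IsStable m c :=
  fun l hl => hc l (hl.trans hmn)

theorem cost_append (c : FreeGroup α → A) (l l' : List (FreeGroup α × A)) :
    cost c (l ++ l') = cost c l + cost (recolor c l) l' := by
  induction l generalizing c with
  | nil => simp [cost, recolor]
  | cons p l ih => simp [cost, recolor, ih, add_assoc]

theorem cost_eq_of_eqOn {c c' : FreeGroup α → A} {Q : Set (FreeGroup α)}
    {l : List (FreeGroup α × A)} (hl : ∀ p ∈ l, p.1 ∈ Q ∧ ∀ t, gen t * p.1 ∈ Q)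
    (hc : Set.EqOn c c' Q) : cost c l = cost c' l := by
  induction l generalizing c c' with
  | nil => rfl
  | cons p l ih =>
    rw [List.forall_mem_cons] at hl
    simp only [cost, moveCost, ih hl.2 (update_eqOn hc p), hc hl.1.1, hc (hl.1.2 _)]

theorem cost_translate (u : FreeGroup α) (c : FreeGroup α → A) (l : List (FreeGroup α × A)) :
    cost (translate u c) l = cost c (translateMoves u l) := by
  induction l generalizing c with
  | nil => rfl
  | cons p l ih =>
    rw [cost, update_translate, ih]
    simp [cost, moveCost, translateMoves, translate, mul_assoc]

/-- The cost of the moves `l` plus the contribution of the edge between `1` and `gen t` to the cost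
of subsequently giving the root `1` the colour `a`. -/
def branchCost (c : FreeGroup α → A) (t : Letter α) (l : List (FreeGroup α × A)) (a : A) : ℤ :=
  cost c l + 𝟙[recolor c l (gen t) = a] - 𝟙[recolor c l (gen t) = c 1]

theorem cost_eq_of_eqOn_branch {c c' : FreeGroup α → A} {t : Letter α}
    {l : List (FreeGroup α × A)} (hl : ∀ p ∈ l, p.1 ∈ branch t) (hc : Set.EqOn c c' (branch t))
    (hroot : c 1 = c' 1) : cost c l = cost c' l := by
  refine cost_eq_of_eqOn (Q := insert 1 (branch t)) (fun p hp => ⟨.inr (hl p hp), fun s => ?_⟩) ?_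
  · exact (gen_mul_mem_branch (hl p hp)).symm
  · rintro g (rfl | hg)
    exacts [hroot, hc hg]

theorem exists_glue (c : FreeGroup α → A) (l : Letter α → List (FreeGroup α × A))
    (hl : ∀ r, ∀ p ∈ l r, p.1 ∈ branch r) (R : Finset (Letter α)) :
    ∃ L : List (FreeGroup α × A), (∀ p ∈ L, ∃ r ∈ R, p ∈ l r) ∧
      L.length = ∑ r ∈ R, (l r).length ∧ cost c L = ∑ r ∈ R, cost c (l r) ∧
      ∀ r ∈ R, recolor c L (gen r) = recolor c (l r) (gen r) := by
  induction R using Finset.induction_on with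
  | empty => exact ⟨[], by simp, by simp, by simp [cost], by simp⟩
  | insert s R hs ih =>
    obtain ⟨L, hmem, hlength, hcost, hrecolor⟩ := ih
    have hbranch {p} (hp : p ∈ L) : ∃ r ∈ R, p.1 ∈ branch r :=
      let ⟨r, hr, hpr⟩ := hmem p hp
      ⟨r, hr, hl r p hpr⟩
    have hunchanged : Set.EqOn (recolor c L) c (branch s) := fun g hg =>
      recolor_apply_of_notMem fun p hp hpg => by
        obtain ⟨r, hr, hpr⟩ := hbranch hp
        exact hs (eq_of_mem_branch (hpg ▸ hpr) hg ▸ hr)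
    have hroot : recolor c L 1 = c 1 := recolor_apply_of_notMem fun p hp hp1 => by
      obtain ⟨r, -, hpr⟩ := hbranch hp
      exact one_notMem_branch r (hp1 ▸ hpr)
    refine ⟨L ++ l s, fun p hp => ?_, ?_, ?_, fun r hr => ?_⟩
    · rcases List.mem_append.1 hp with hp | hp
      · exact (hmem p hp).imp fun r hr => ⟨Finset.mem_insert_of_mem hr.1, hr.2⟩
      · exact ⟨s, Finset.mem_insert_self s R, hp⟩
    · rw [List.length_append, Finset.sum_insert hs, hlength, add_comm]
    · rw [cost_append, Finset.sum_insert hs, hcost, add_comm,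
        cost_eq_of_eqOn_branch (hl s) hunchanged hroot]
    · rw [recolor_append]
      rcases Finset.mem_insert.1 hr with rfl | hr
      · exact recolor_eqOn hunchanged _ (gen_mem_branch r)
      · rw [← hrecolor r hr]
        refine recolor_apply_of_notMem fun p hp hpr => hs ?_
        exact eq_of_mem_branch (hl s p hp) (hpr ▸ gen_mem_branch r) ▸ hr

theorem exists_recolor_root (c : FreeGroup α → A) (l : Letter α → List (FreeGroup α × A))
    (hl : ∀ r, ∀ p ∈ l r, p.1 ∈ branch r) (a : A) :
    ∃ L : List (FreeGroup α × A), (∀ p ∈ L, p.1 = 1 ∨ ∃ r, p ∈ l r) ∧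
      L.length = ∑ r, (l r).length + 1 ∧ cost c L = ∑ r, branchCost c r (l r) a ∧
      recolor c L 1 = a := by
  obtain ⟨L, hmem, hlength, hcost, hrecolor⟩ := exists_glue c l hl Finset.univ
  have hroot : recolor c L 1 = c 1 := recolor_apply_of_notMem fun p hp hp1 => by
    obtain ⟨r, -, hpr⟩ := hmem p hp
    exact one_notMem_branch r (hp1 ▸ hl r p hpr)
  refine ⟨L ++ [(1, a)], fun p hp => ?_, by simp [hlength], ?_, by simp [recolor_append, recolor]⟩
  · rcases List.mem_append.1 hp with hp | hp
    · exact .inr ((hmem p hp).imp fun r => And.right)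
    · exact .inl (congrArg Prod.fst (List.mem_singleton.1 hp))
  · simp only [cost_append, hcost, cost, moveCost, mul_one, hroot, add_zero,
      hrecolor _ (Finset.mem_univ _), branchCost, Finset.sum_add_distrib, Finset.sum_sub_distrib]
    ring

end Recoloring

section BranchPotential

variable {α A : Type*} [Fintype α] [DecidableEq α] [DecidableEq A]

/-- An upper bound for the least `branchCost c t l a` over moves `l` in the branch `t`: only moves
at depth at most `n` below `gen t` are considered, each vertex being recoloured at most once and
after its descendants. -/
noncomputable def branchPotential : ℕ → (FreeGroup α → A) → Letter α → A → ℤ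
  | 0, c, t, a => branchCost c t [] a
  | n + 1, c, t, a => (⨅ i, (∑ r ∈ Finset.univ.erase (opp t),
      branchPotential n (translate (gen t) c) r i + 𝟙[i = a])) - 𝟙[c (gen t) = c 1]

theorem branchCost_nil (c : FreeGroup α → A) (t : Letter α) (a : A) :
    branchCost c t [] a = 𝟙[c (gen t) = a] - 𝟙[c (gen t) = c 1] := by
  rw [branchCost, cost, zero_add, recolor]

theorem branchCost_translate_opp (c : FreeGroup α → A) (t : Letter α) (a : A) :
    branchCost (translate (gen t) c) (opp t) [] a = 𝟙[a = c 1] - 𝟙[c (gen t) = c 1] := by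
  simp [branchCost_nil, translate, gen_opp, eq_comm (a := c 1)]

theorem exists_branchCost_eq_sum_erase (c : FreeGroup α → A) (t : Letter α) (a i : A)
    {l : Letter α → List (FreeGroup α × A)} (hl : ∀ r, ∀ p ∈ l r, p.1 ∈ branch r)
    (hopp : l (opp t) = []) :
    ∃ L : List (FreeGroup α × A), (∀ p ∈ L, p.1 ∈ branch t) ∧
      L.length = ∑ r, (l r).length + 1 ∧
      branchCost c t L a = ∑ r ∈ Finset.univ.erase (opp t),
        branchCost (translate (gen t) c) r (l r) i + 𝟙[i = a] - 𝟙[c (gen t) = c 1] := by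
  obtain ⟨L, hL, hlength, hcost, hroot⟩ := exists_recolor_root (translate (gen t) c) l hl i
  have hgen : recolor c (translateMoves (gen t) L) (gen t) = i := by
    rw [← hroot, recolor_translate, translate, one_mul]
  have hlength' : (translateMoves (gen t) L).length = ∑ r, (l r).length + 1 := by
    rw [translateMoves, List.length_map, hlength]
  refine ⟨translateMoves (gen t) L, fun p hp => ?_, hlength', ?_⟩
  · obtain ⟨q, hq, rfl⟩ := List.mem_map.1 hp
    refine mul_gen_mem_branch fun hmem => ?_
    rcases hL q hq with h1 | ⟨r, hr⟩
    · exact one_notMem_branch _ (h1 ▸ hmem)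
    · obtain rfl := eq_of_mem_branch (hl r q hr) hmem
      simp [hopp] at hr
  · rw [branchCost, hgen, ← cost_translate, hcost,
      ← Finset.add_sum_erase _ _ (Finset.mem_univ (opp t)), hopp, branchCost_translate_opp]
    ring

variable [Finite A]

theorem branchPotential_root_nonpos (n : ℕ) (c : FreeGroup α → A) (t : Letter α) :
    branchPotential n c t (c 1) ≤ 0 := by
  induction n generalizing c t with
  | zero => simp [branchPotential, branchCost_nil]
  | succ n ih =>
    rw [branchPotential, sub_nonpos]
    refine (Finite.ciInf_le _ (c (gen t))).trans (add_le_of_nonpos_left ?_)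
    refine Finset.sum_nonpos fun r _ => ?_
    simpa [translate] using ih (translate (gen t) c) r

theorem exists_branchPotential_eq_add_iverson [Nonempty A] (n : ℕ) (c : FreeGroup α → A)
    (t : Letter α) :
    ∃ (b : ℤ) (u : Option A), ∀ a, branchPotential n c t a = b + 𝟙[u = some a] := by
  cases n with
  | zero => exact ⟨-𝟙[c (gen t) = c 1], some (c (gen t)), fun a => by
      simp only [branchPotential, branchCost_nil, Option.some.injEq]; ring⟩
  | succ n =>
    obtain ⟨u, hu⟩ := exists_iInf_add_iverson_eq fun i =>
      ∑ r ∈ Finset.univ.erase (opp t), branchPotential n (translate (gen t) c) r i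
    exact ⟨_, u, fun a => by rw [branchPotential, hu, add_sub_right_comm]⟩

theorem iInf_branchPotential_succ [Nontrivial A] (n : ℕ) (c : FreeGroup α → A) (t : Letter α) :
    ⨅ a, branchPotential (n + 1) c t a =
      (⨅ a, ∑ r ∈ Finset.univ.erase (opp t), branchPotential n (translate (gen t) c) r a)
        - 𝟙[c (gen t) = c 1] := by
  obtain ⟨u, hu⟩ := exists_iInf_add_iverson_eq fun i =>
    ∑ r ∈ Finset.univ.erase (opp t), branchPotential n (translate (gen t) c) r i
  simp_rw [branchPotential, hu, add_sub_right_comm]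
  rw [← add_ciInf (Set.finite_range _).bddBelow, iInf_iverson_eq_zero, add_zero]

theorem exists_branchCost_le_branchPotential [Nonempty A] (n : ℕ) :
    ∃ m, ∀ (c : FreeGroup α → A) t a, ∃ l : List (FreeGroup α × A), (∀ p ∈ l, p.1 ∈ branch t) ∧
      l.length ≤ m ∧ branchCost c t l a ≤ branchPotential n c t a := by
  induction n with
  | zero => exact ⟨0, fun c t a => ⟨[], by simp, le_rfl, le_rfl⟩⟩
  | succ n ih =>
    obtain ⟨m, hm⟩ := ih
    refine ⟨Fintype.card (Letter α) * m + 1, fun c t a => ?_⟩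
    obtain ⟨i, hi⟩ := exists_eq_ciInf_of_finite (f := fun i => ∑ r ∈ Finset.univ.erase (opp t),
      branchPotential n (translate (gen t) c) r i + 𝟙[i = a])
    choose l hbranch hlength hcost using fun r => hm (translate (gen t) c) r i
    let l' := Function.update l (opp t) []
    have hopp : l' (opp t) = [] := Function.update_self ..
    have hl' {r} (hr : r ≠ opp t) : l' r = l r := Function.update_of_ne hr _ _
    have hbranch' (r) : ∀ p ∈ l' r, p.1 ∈ branch r := by
      rcases eq_or_ne r (opp t) with rfl | hr
      · simp [hopp]
      · exact hl' hr ▸ hbranch r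
    have hlength' (r) : (l' r).length ≤ m := by
      rcases eq_or_ne r (opp t) with rfl | hr
      · simp [hopp]
      · exact hl' hr ▸ hlength r
    have hsum : ∑ r ∈ Finset.univ.erase (opp t), branchCost (translate (gen t) c) r (l' r) i
        ≤ ∑ r ∈ Finset.univ.erase (opp t), branchPotential n (translate (gen t) c) r i :=
      Finset.sum_le_sum fun r hr => hl' (Finset.ne_of_mem_erase hr) ▸ hcost r
    obtain ⟨L, hL, hL_length, hL_cost⟩ := exists_branchCost_eq_sum_erase c t a i hbranch' hopp
    refine ⟨L, hL, ?_, ?_⟩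
    · rw [hL_length]
      gcongr
      exact Finset.sum_le_card_nsmul _ _ m fun r _ => hlength' r
    · rw [hL_cost, branchPotential, ← hi]
      gcongr

theorem exists_forall_isStable_neg_one_le_iInf [Nonempty A] (n : ℕ) :
    ∃ m, ∀ c : FreeGroup α → A, IsStable m c → ∀ t, -1 ≤ ⨅ a, branchPotential n c t a := by
  obtain ⟨m, hm⟩ := exists_branchCost_le_branchPotential (α := α) (A := A) n
  refine ⟨m, fun c hc t => le_ciInf fun a => ?_⟩
  obtain ⟨l, -, hlength, hle⟩ := hm c t a
  have hcost := hc l hlength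
  rw [branchCost] at hle
  linarith [iverson_nonneg (recolor c l (gen t) = a), iverson_le_one (recolor c l (gen t) = c 1)]

end BranchPotential

theorem sum_iInf_sum_erase_branchPotential_le {α A : Type*} [Fintype α] [DecidableEq α]
    [Nonempty α] [Fintype A] [DecidableEq A] (hcard : Fintype.card α < Fintype.card A)
    (n : ℕ) (c : FreeGroup α → A) :
    ∑ s, ⨅ a, ∑ r ∈ Finset.univ.erase s, branchPotential n c r a
      ≤ ∑ t, ⨅ a, branchPotential n c t a := by
  have hα : 1 ≤ Fintype.card α := Fintype.card_pos
  have : Nontrivial A := Fintype.one_lt_card_iff_nontrivial.1 (hα.trans_lt hcard)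
  refine sum_iInf_sum_erase_le _ (c 1) ?_ ?_ (branchPotential_root_nonpos n c)
    (exists_branchPotential_eq_add_iverson n c) <;>
  · simp only [Fintype.card_prod, Fintype.card_bool]
    lia

section Token

variable {α A : Type*} [Fintype α] [DecidableEq α] [DecidableEq A] {k : ℕ}
  {c : FreeGroup α → A}

/-- At most `k` moves in the branch `t` can make the edge between `1` and `gen t` monochromatic
without increasing the total number of monochromatic edges. For `k = 0` this means that the edge is
monochromatic; in general, a monochromatic edge can be pushed there from at most `k` steps away. -/
def HasToken (k : ℕ) (c : FreeGroup α → A) (t : Letter α) : Prop :=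
  ∃ l : List (FreeGroup α × A), (∀ p ∈ l, p.1 ∈ branch t) ∧ l.length ≤ k ∧ cost c l ≤ 0 ∧
    recolor c l (gen t) = c 1

theorem hasToken_zero_iff {t : Letter α} : HasToken 0 c t ↔ c (gen t) = c 1 := by
  constructor
  · rintro ⟨l, -, hlength, -, hroot⟩
    rwa [List.length_eq_zero_iff.1 (Nat.le_zero.1 hlength)] at hroot
  · exact fun h => ⟨[], by simp, le_rfl, le_rfl, h⟩

theorem exists_recolor_root_of_hasToken {R : Finset (Letter α)} (hR : ∀ r ∈ R, HasToken k c r)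
    {j : A} (hj : j ≠ c 1) :
    ∃ L : List (FreeGroup α × A), (∀ p ∈ L, p.1 = 1 ∨ ∃ r ∈ R, p.1 ∈ branch r) ∧
      L.length ≤ R.card * k + 1 ∧
      cost c L ≤ Finset.card {r | r ∉ R ∧ c (gen r) = j} - (R.card : ℤ) ∧
      recolor c L 1 = j := by
  have hl (r : Letter α) : ∃ l : List (FreeGroup α × A), (∀ p ∈ l, p.1 ∈ branch r) ∧
      (r ∉ R → l = []) ∧ l.length ≤ (if r ∈ R then k else 0) ∧
      branchCost c r l j ≤ 𝟙[r ∉ R ∧ c (gen r) = j] - 𝟙[r ∈ R] := by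
    by_cases hr : r ∈ R
    · obtain ⟨l, hbranch, hlength, hcost, hroot⟩ := hR r hr
      refine ⟨l, hbranch, absurd hr, by simpa [hr], ?_⟩
      simpa [branchCost, hr, hroot, hj.symm] using hcost
    · refine ⟨[], by simp, fun _ => rfl, by simp, ?_⟩
      rw [branchCost_nil]
      simpa [hr] using iverson_nonneg (c (gen r) = c 1)
  choose l hbranch hnil hlength hcost using hl
  obtain ⟨L, hL, hL_length, hL_cost, hL_root⟩ := exists_recolor_root c l hbranch j
  refine ⟨L, fun p hp => (hL p hp).imp_right ?_, ?_, ?_, hL_root⟩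
  · rintro ⟨r, hr⟩
    refine ⟨r, ?_, hbranch r p hr⟩
    by_contra hrR
    simp [hnil r hrR] at hr
  · rw [hL_length]
    gcongr
    exact (Finset.sum_le_sum fun r _ => hlength r).trans_eq (by simp)
  · rw [hL_cost]
    exact (Finset.sum_le_sum fun r _ => hcost r).trans_eq (by simp [Finset.sum_sub_distrib])

theorem IsStable.card_le_card_filter_of_hasToken {m : ℕ} (hc : IsStable m c)
    {R : Finset (Letter α)} (hm : R.card * k + 1 ≤ m) (hR : ∀ r ∈ R, HasToken k c r)
    {j : A} (hj : j ≠ c 1) : R.card ≤ Finset.card {r | r ∉ R ∧ c (gen r) = j} := by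
  obtain ⟨L, -, hlength, hcost, -⟩ := exists_recolor_root_of_hasToken hR hj
  have hstable := hc L (hlength.trans hm)
  lia

theorem IsStable.hasToken_unique [Fintype A] (hcard : Fintype.card α < Fintype.card A)
    (hc : IsStable (2 * k + 1) c) {s t : Letter α} (hs : HasToken k c s) (ht : HasToken k c t) :
    s = t := by
  by_contra hne
  have hR : ∀ r ∈ ({s, t} : Finset (Letter α)), HasToken k c r := by simp [hs, ht]
  have hpair : Finset.card {s, t} = 2 := Finset.card_pair hne
  have htwo : ∀ j ∈ Finset.univ.erase (c 1), 2 ≤ Finset.card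
      {r ∈ Finset.univ \ {s, t} | c (gen r) = j} := fun j hj => by
    have := hc.card_le_card_filter_of_hasToken (by rw [hpair]) hR (Finset.ne_of_mem_erase hj)
    rw [hpair] at this
    convert this using 2
    ext r
    simp
  have hsum := Finset.card_nsmul_le_sum _ _ 2 htwo
  rw [Finset.sum_card_fiberwise_eq_card_filter, Finset.card_erase_of_mem (Finset.mem_univ _),
    Finset.card_univ, smul_eq_mul] at hsum
  have hle := hsum.trans (Finset.card_filter_le _ _)
  rw [Finset.card_sdiff_of_subset (Finset.subset_univ _), hpair, Finset.card_univ,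
    Fintype.card_prod, Fintype.card_bool] at hle
  have hα : 0 < Fintype.card α := Fintype.card_pos_iff.2 ⟨s.1⟩
  lia

theorem HasToken.translate_opp {s t : Letter α} (ht : HasToken k c t) (hst : s ≠ t)
    (hs : c (gen s) ≠ c 1) (hunique : ∀ r ≠ t, c (gen r) = c (gen s) → r = s) :
    HasToken (k + 1) (translate (gen s) c) (opp s) := by
  obtain ⟨L, hL, hlength, hcost, hroot⟩ :=
    exists_recolor_root_of_hasToken (R := {t}) (by simpa using ht) hs
  have hc : translate (gen (opp s)) (translate (gen s) c) = c := by
    funext g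
    simp [translate, gen_opp]
  have hcount : Finset.card {r | r ∉ ({t} : Finset (Letter α)) ∧ c (gen r) = c (gen s)} ≤ 1 :=
    (Finset.card_le_card fun r hr => by
      simp only [Finset.mem_filter, Finset.mem_singleton] at hr ⊢
      exact hunique r hr.2.1 hr.2.2).trans_eq (Finset.card_singleton s)
  refine ⟨translateMoves (gen (opp s)) L, fun p hp => ?_, ?_, ?_, ?_⟩
  · obtain ⟨q, hq, rfl⟩ := List.mem_map.1 hp
    refine mul_gen_mem_branch fun hqs => ?_
    rw [opp_opp] at hqs
    rcases hL q hq with h1 | ⟨r, hr, hqr⟩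
    · exact one_notMem_branch s (h1 ▸ hqs)
    · exact hst (eq_of_mem_branch hqs (Finset.mem_singleton.1 hr ▸ hqr))
  · simpa [translateMoves] using hlength
  · rw [← cost_translate, hc]
    rw [Finset.card_singleton] at hcost
    lia
  · have happly := congrFun (recolor_translate (gen (opp s)) (translate (gen s) c) L) 1
    rw [hc, hroot, translate, one_mul] at happly
    rw [← happly, translate, one_mul]

open scoped Classical in
theorem IsStable.card_filter_hasToken_le_one [Fintype A]
    (hcard : Fintype.card α < Fintype.card A) (hc : IsStable (2 * k + 1) c) :
    Finset.card {t | HasToken k c t} ≤ 1 :=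
  Finset.card_le_one.2 fun s hs t ht => by
    rw [Finset.mem_filter_univ] at hs ht
    exact hc.hasToken_unique hcard hs ht

open scoped Classical in
theorem IsStable.three_mul_card_filter_hasToken_le [Fintype A]
    (hcard : Fintype.card α + 2 ≤ Fintype.card A) (hc : IsStable (2 * k + 1) c) :
    3 * Finset.card {t | HasToken k c t}
      ≤ Finset.card {s | HasToken (k + 1) (translate (gen s) c) (opp s)} := by
  rcases Finset.eq_empty_or_nonempty {t | HasToken k c t} with hempty | ⟨t, ht⟩
  · simp [hempty]
  rw [Finset.mem_filter_univ] at ht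
  have hcolor : ∀ j ≠ c 1, ∃ r ≠ t, c (gen r) = j := fun j hj => by
    have hpos := hc.card_le_card_filter_of_hasToken (k := k) (R := {t})
      (by rw [Finset.card_singleton]; lia) (by simpa using ht) hj
    obtain ⟨r, hr⟩ := Finset.card_pos.1 (Nat.one_pos.trans_le hpos)
    simp only [Finset.mem_filter, Finset.mem_singleton] at hr
    exact ⟨r, hr.2⟩
  have hthree := three_le_card_filter_unique (fun s => c (gen s)) (c 1) t
    (by rw [Fintype.card_prod, Fintype.card_bool]; lia) hcolor
  have hone := hc.card_filter_hasToken_le_one (by lia)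
  refine (Nat.mul_le_mul_left 3 hone).trans (hthree.trans (Finset.card_le_card fun s hs => ?_))
  rw [Finset.mem_filter_univ] at hs ⊢
  exact ht.translate_opp hs.1 hs.2.1 hs.2.2

end Token

section Marker

open scoped Pointwise

variable {G X : Type*} [Group G] [MulAction G X] [MeasurableSpace X] [MeasurableConstSMul G X]
  {μ : Measure X}

/-- The action is essentially free: the fixed points of each `g ≠ 1` form a null set. -/
def IsAEFree (G : Type*) {X : Type*} [Group G] [MulAction G X] [MeasurableSpace X]
    (μ : Measure X) : Prop :=
  ∀ g : G, g ≠ 1 → ∀ᵐ x ∂μ, g • x ≠ x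

theorem exists_disjoint_smul [MeasurableSpace.CountablySeparated X] {g : G}
    (hg : ∀ᵐ x ∂μ, g • x ≠ x) {U : Set X} (hU : MeasurableSet U) (hU₀ : μ U ≠ 0) :
    ∃ V ⊆ U, MeasurableSet V ∧ μ V ≠ 0 ∧ Disjoint (g • V) V := by
  by_contra! hnull
  obtain ⟨S, hS, hSm, hsep⟩ :=
    (MeasurableSpace.CountablySeparated.countably_separated (α := X)).exists_countable_separating
  have hpre {s : Set X} (hs : MeasurableSet s) : MeasurableSet {x | g • x ∈ s} :=
    measurable_const_smul g hs
  have hzero {s T : Set X} (hs : MeasurableSet s) (hsT : Disjoint s T)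
      (hsub : ∀ x ∈ s, g • x ∈ T) : μ (U ∩ s) = 0 := by
    by_contra hpos
    refine hnull (U ∩ s) Set.inter_subset_left (hU.inter hs) hpos (Set.disjoint_left.2 ?_)
    rintro _ ⟨x, hx, rfl⟩ hgx
    exact hsT.notMem_of_mem_left hgx.2 (hsub x hx.2)
  have hae : ∀ᵐ x ∂μ, ∀ s ∈ S, x ∈ U → (g • x ∈ s ↔ x ∈ s) := by
    refine (ae_ball_iff hS).2 fun s hs => ?_
    have hin := hzero ((hSm s hs).inter (hpre (hSm s hs).compl))
      (disjoint_compl_right.mono_left Set.inter_subset_left) fun x hx => hx.2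
    have hout := hzero ((hSm s hs).compl.inter (hpre (hSm s hs)))
      (disjoint_compl_left.mono_left Set.inter_subset_left) fun x hx => hx.2
    filter_upwards [measure_eq_zero_iff_ae_notMem.1 hin, measure_eq_zero_iff_ae_notMem.1 hout]
      with x hxin hxout hxU
    by_contra hne
    by_cases hxs : x ∈ s
    · exact hxin ⟨hxU, hxs, fun hgx => hne (iff_of_true hgx hxs)⟩
    · exact hxout ⟨hxU, hxs, by_contra fun hgx => hne (iff_of_false hgx hxs)⟩
  refine hU₀ (measure_eq_zero_iff_ae_notMem.2 ?_)
  filter_upwards [hg, hae] with x hgx hx hxU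
  exact hgx (hsep _ trivial _ trivial fun s hs => hx s hs hxU)

theorem IsAEFree.exists_pairwiseDisjoint_smul [MeasurableSpace.CountablySeparated X]
    (hfree : IsAEFree G μ) {U : Set X} (hU : MeasurableSet U) (hU₀ : μ U ≠ 0) (Q : Finset G) :
    ∃ V ⊆ U, MeasurableSet V ∧ μ V ≠ 0 ∧ (Q : Set G).PairwiseDisjoint (· • V) := by
  classical
  have hdisjoint (F : Finset G) (hF : 1 ∉ F) :
      ∃ V ⊆ U, MeasurableSet V ∧ μ V ≠ 0 ∧ ∀ g ∈ F, Disjoint (g • V) V := by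
    induction F using Finset.induction_on with
    | empty => exact ⟨U, subset_rfl, hU, hU₀, by simp⟩
    | insert g F _ ih =>
      rw [Finset.mem_insert, not_or] at hF
      obtain ⟨V, hVU, hV, hV₀, hVF⟩ := ih hF.2
      obtain ⟨W, hWV, hW, hW₀, hWg⟩ := exists_disjoint_smul (hfree g (Ne.symm hF.1)) hV hV₀
      refine ⟨W, hWV.trans hVU, hW, hW₀, Finset.forall_mem_insert .. |>.2 ⟨hWg, fun h hh => ?_⟩⟩
      exact (hVF h hh).mono (Set.smul_set_mono hWV) hWV
  obtain ⟨V, hVU, hV, hV₀, hdis⟩ := hdisjoint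
    (((Q ×ˢ Q).image fun p => p.2⁻¹ * p.1).erase 1) (Finset.notMem_erase _ _)
  refine ⟨V, hVU, hV, hV₀, fun g hg h hh hne => ?_⟩
  have hmem : h⁻¹ * g ∈ ((Q ×ˢ Q).image fun p => p.2⁻¹ * p.1).erase 1 :=
    Finset.mem_erase.2 ⟨fun h1 => hne (inv_mul_eq_one.1 h1).symm,
      Finset.mem_image.2 ⟨(g, h), Finset.mk_mem_product hg hh, rfl⟩⟩
  have := (Set.disjoint_smul_set (a := h)).2 (hdis _ hmem)
  rwa [smul_smul, mul_inv_cancel_left] at this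

end Marker

section Energy

variable {α X A : Type*} [MulAction (FreeGroup α) X]

/-- The colouring of the tree that a labelling of `X` induces on the orbit of `x`. -/
def orbitColoring (f : X → A) (x : X) : FreeGroup α → A := fun g => f (g • x)

theorem orbitColoring_smul (f : X → A) (g : FreeGroup α) (x : X) :
    orbitColoring f (g • x) = translate g (orbitColoring f x) := by
  funext h
  rw [orbitColoring, translate, orbitColoring, mul_smul]

variable [Fintype α] [MeasurableSpace X] {μ : Measure X}

/-- The density of monochromatic edges of a labelling, each edge being counted at both ends. -/
noncomputable def energy (μ : Measure X) (f : X → A) : ℝ :=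
  ∑ t : Letter α, μ.real {x | f (gen t • x) = f x}

theorem energy_nonneg (f : X → A) : 0 ≤ energy (α := α) μ f :=
  Finset.sum_nonneg fun _ _ => measureReal_nonneg

theorem energy_le_card [IsProbabilityMeasure μ] (f : X → A) :
    energy (α := α) μ f ≤ Fintype.card (Letter α) := by
  simpa [energy] using Finset.sum_le_card_nsmul Finset.univ _ (1 : ℝ) fun (t : Letter α) _ =>
    measureReal_le_one (μ := μ) (s := {x | f (gen t • x) = f x})

theorem ae_ne_of_energy_eq_zero [IsFiniteMeasure μ] {f : X → A} (hf : energy (α := α) μ f = 0) :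
    ∀ᵐ x ∂μ, ∀ t : Letter α, f (gen t • x) ≠ f x := by
  rw [ae_all_iff]
  intro t
  have hzero := (Finset.sum_eq_zero_iff_of_nonneg fun _ _ => measureReal_nonneg).1 hf t
    (Finset.mem_univ t)
  exact measure_eq_zero_iff_ae_notMem.1 ((measureReal_eq_zero_iff).1 hzero)

variable [SMulInvariantMeasure (FreeGroup α) X μ] [MeasurableSpace A]

theorem energy_le_add_dist [IsFiniteMeasure μ] (f g : Labeling μ A) :
    energy (α := α) μ f ≤ energy (α := α) μ g + 2 * Fintype.card (Letter α) * dist f g := by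
  have hterm (t : Letter α) : μ.real {x | f (gen t • x) = f x}
      ≤ μ.real {x | g (gen t • x) = g x} + 2 * dist f g := by
    have hsub : {x | f (gen t • x) = f x} ⊆ {x | g (gen t • x) = g x}
        ∪ ({x | f x ≠ g x} ∪ (gen t • ·) ⁻¹' {x | f x ≠ g x}) := fun x hx => by
      by_contra! h
      simp only [Set.mem_union, Set.mem_preimage, Set.mem_ofPred_eq, not_or, not_not] at h hx
      exact h.1 (h.2.2.symm.trans (hx.trans h.2.1))
    refine (measureReal_mono hsub).trans ((measureReal_union_le _ _).trans ?_)
    have hpreimage : μ.real ((gen t • ·) ⁻¹' {x | f x ≠ g x}) = dist f g :=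
      congrArg ENNReal.toReal (measure_preimage_smul _ _ _)
    grw [measureReal_union_le, hpreimage, two_mul, Labeling.dist_def]
  refine (Finset.sum_le_sum fun t _ => hterm t).trans_eq ?_
  simp only [Finset.sum_add_distrib, energy, Finset.sum_const, Finset.card_univ, nsmul_eq_mul]
  ring

theorem continuous_energy [IsFiniteMeasure μ] :
    Continuous fun f : Labeling μ A => energy (α := α) μ f :=
  (LipschitzWith.of_le_add_mul (2 * Fintype.card (Letter α)) energy_le_add_dist).continuous

end Energy

section LocalFunctional

theorem continuous_iInf_int {Y ι : Type*} [TopologicalSpace Y] [Finite ι] {F : ι → Y → ℤ}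
    (hF : ∀ i, Continuous (F i)) : Continuous fun y => ⨅ i, F i y :=
  (continuous_of_discreteTopology (f := fun v : ι → ℤ => ⨅ i, v i)).comp (continuous_pi hF)

variable {α A : Type*} [TopologicalSpace A]

theorem continuous_translate (u : FreeGroup α) :
    Continuous (translate u : (FreeGroup α → A) → FreeGroup α → A) :=
  continuous_pi fun g => continuous_apply (g * u)

theorem continuous_recolor [DecidableEq α] (l : List (FreeGroup α × A)) :
    Continuous fun c : FreeGroup α → A => recolor c l := by
  induction l with
  | nil => exact continuous_id
  | cons p l ih => exact ih.comp (continuous_id.update p.1 continuous_const)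

variable [DiscreteTopology A] [DecidableEq A]

theorem continuous_iverson (g h : FreeGroup α) :
    Continuous fun c : FreeGroup α → A => 𝟙[c g = c h] := by
  have hpair : Continuous fun c : FreeGroup α → A => (c g, c h) :=
    (continuous_apply g).prodMk (continuous_apply h)
  exact (continuous_of_discreteTopology (f := fun p : A × A => 𝟙[p.1 = p.2])).comp hpair

theorem continuous_iverson_const (g : FreeGroup α) (a : A) :
    Continuous fun c : FreeGroup α → A => 𝟙[c g = a] :=
  (continuous_of_discreteTopology (f := fun b : A => 𝟙[b = a])).comp (continuous_apply g)

variable [Fintype α]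

theorem continuous_moveCost (g : FreeGroup α) (a : A) :
    Continuous fun c : FreeGroup α → A => moveCost c g a :=
  continuous_finsetSum _ fun _ _ =>
    (continuous_iverson_const _ a).sub (continuous_iverson _ g)

variable [DecidableEq α]

theorem continuous_cost (l : List (FreeGroup α × A)) :
    Continuous fun c : FreeGroup α → A => cost c l := by
  induction l with
  | nil => exact continuous_const
  | cons p l ih =>
    exact (continuous_moveCost p.1 p.2).add (ih.comp (continuous_id.update p.1 continuous_const))

theorem continuous_branchPotential [Finite A] (n : ℕ) (t : Letter α) (a : A) :
    Continuous fun c : FreeGroup α → A => branchPotential n c t a := by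
  induction n generalizing t a with
  | zero =>
    simp only [branchPotential, branchCost_nil]
    exact (continuous_iverson_const _ a).sub (continuous_iverson _ 1)
  | succ n ih =>
    refine (continuous_iInf_int fun i => ?_).sub (continuous_iverson _ 1)
    exact (continuous_finsetSum _ fun r _ => (ih r i).comp (continuous_translate _)).add
      continuous_const

end LocalFunctional

section OrbitIntegral

variable {α X A : Type*} [MulAction (FreeGroup α) X] [MeasurableSpace X] {μ : Measure X}
  [MeasurableConstSMul (FreeGroup α) X] [MeasurableSpace A]

theorem measurable_orbitColoring {f : X → A} (hf : Measurable f) :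
    Measurable (orbitColoring (α := α) f) :=
  measurable_pi_lambda _ fun g => hf.comp (measurable_const_smul g)

variable [TopologicalSpace A] [DiscreteTopology A] [BorelSpace A] [Finite A] [Countable α]

theorem measurable_comp_orbitColoring {F : (FreeGroup α → A) → ℤ} (hF : Continuous F)
    {f : X → A} (hf : Measurable f) : Measurable fun x => F (orbitColoring f x) :=
  hF.measurable.comp (measurable_orbitColoring hf)

theorem integrable_comp_orbitColoring [IsFiniteMeasure μ] {F : (FreeGroup α → A) → ℤ}
    (hF : Continuous F) {f : X → A} (hf : Measurable f) :
    Integrable (fun x => (F (orbitColoring f x) : ℝ)) μ := by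
  obtain ⟨C, hC⟩ := isCompact_univ.exists_bound_of_continuousOn
    (continuous_of_discreteTopology (f := ((↑) : ℤ → ℝ)) |>.comp hF).continuousOn
  have hmeas := measurable_from_top (f := ((↑) : ℤ → ℝ)).comp (measurable_comp_orbitColoring hF hf)
  exact .of_bound hmeas.aestronglyMeasurable C (.of_forall fun x => hC _ trivial)

end OrbitIntegral

section Move

open scoped Pointwise

theorem integral_iverson {X : Type*} [MeasurableSpace X] {μ : Measure X} {p : X → Prop}
    [DecidablePred p] (hp : MeasurableSet {x | p x}) :
    ∫ x, ((𝟙[p x] : ℤ) : ℝ) ∂μ = μ.real {x | p x} := by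
  rw [← integral_indicator_one hp]
  simp [Set.indicator_apply]

variable {α X A : Type*} [MulAction (FreeGroup α) X]

theorem iverson_piecewise_eq_add_indicator [DecidableEq A] (f : X → A) {V : Set X}
    [∀ x, Decidable (x ∈ V)] (t : Letter α) (hV : Disjoint (gen t • V) V) (a : A) (x : X) :
    ((𝟙[V.piecewise (fun _ => a) f (gen t • x) = V.piecewise (fun _ => a) f x] : ℤ) : ℝ) =
      (𝟙[f (gen t • x) = f x] : ℤ)
        + V.indicator (fun y => (𝟙[f (gen t • y) = a] - 𝟙[f (gen t • y) = f y] : ℝ)) x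
        + V.indicator (fun y => (𝟙[f (gen (opp t) • y) = a] - 𝟙[f (gen (opp t) • y) = f y] : ℝ))
            (gen t • x) := by
  have hback : gen (opp t) • gen t • x = x := by rw [gen_opp, inv_smul_smul]
  by_cases hx : x ∈ V
  · have hgx : gen t • x ∉ V := Set.disjoint_left.1 hV (Set.smul_mem_smul_set hx)
    simp [hx, hgx]
  · by_cases hgx : gen t • x ∈ V
    · simp [hx, hgx, hback, eq_comm]
    · simp [hx, hgx]

theorem orbitColoring_piecewise_eqOn [DecidableEq α] (f : X → A) {U : Set X}
    {Q : Set (FreeGroup α)} (hQ : Q.PairwiseDisjoint (· • U)) {g : FreeGroup α} (hg : g ∈ Q)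
    [∀ x, Decidable (x ∈ g • U)] (a : A) {x : X} (hx : x ∈ U) :
    Set.EqOn (orbitColoring ((g • U).piecewise (fun _ => a) f) x)
      (Function.update (orbitColoring f x) g a) Q := fun h hh => by
  rcases eq_or_ne h g with rfl | hne
  · simp [orbitColoring, Set.smul_mem_smul_set hx]
  · have hhx : h • x ∉ g • U := Set.disjoint_left.1 (hQ hh hg hne) (Set.smul_mem_smul_set hx)
    simp [orbitColoring, hhx, hne]

variable [MeasurableSpace X] {μ : Measure X} [MeasurableConstSMul (FreeGroup α) X]

theorem setIntegral_smul_moveCost [Fintype α] [DecidableEq A]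
    [SMulInvariantMeasure (FreeGroup α) X μ] (f : X → A) (U : Set X) (g : FreeGroup α) (a : A) :
    ∫ x in g • U, (moveCost (orbitColoring f x) (1 : FreeGroup α) a : ℝ) ∂μ
      = ∫ x in U, (moveCost (orbitColoring f x) g a : ℝ) ∂μ := by
  have htranslate (c : FreeGroup α → A) : moveCost (translate g c) 1 a = moveCost c g a := by
    simp [moveCost, translate]
  rw [← (measurePreserving_smul g μ).setIntegral_preimage_emb (measurableEmbedding_const_smul g),
    Set.preimage_smul, inv_smul_smul]
  simp_rw [orbitColoring_smul, htranslate]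

variable [MeasurableSpace A] [TopologicalSpace A] [DiscreteTopology A] [BorelSpace A] [Finite A]
  [DecidableEq A]

theorem integral_iverson_edge {f : X → A} (hf : Measurable f) (t : Letter α) :
    ∫ x, ((𝟙[f (gen t • x) = f x] : ℤ) : ℝ) ∂μ = μ.real {x | f (gen t • x) = f x} :=
  integral_iverson (measurableSet_eq_fun (hf.comp (measurable_const_smul _)) hf)

variable [IsFiniteMeasure μ]

theorem integrable_iverson_edge [Countable α] {f : X → A} (hf : Measurable f) (t : Letter α) :
    Integrable (fun x => ((𝟙[f (gen t • x) = f x] : ℤ) : ℝ)) μ := by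
  simpa [orbitColoring] using
    integrable_comp_orbitColoring (μ := μ) (continuous_iverson (gen t) 1) hf

variable [Fintype α]

theorem setIntegral_cost_cons [DecidableEq α] {f : X → A} (hf : Measurable f) (U : Set X)
    (p : FreeGroup α × A) (l : List (FreeGroup α × A)) :
    ∫ x in U, (cost (orbitColoring f x) (p :: l) : ℝ) ∂μ
      = ∫ x in U, (moveCost (orbitColoring f x) p.1 p.2 : ℝ) ∂μ
        + ∫ x in U, (cost (Function.update (orbitColoring f x) p.1 p.2) l : ℝ) ∂μ := by
  have hcont : Continuous fun c : FreeGroup α → A => cost (Function.update c p.1 p.2) l :=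
    (continuous_cost l).comp (continuous_id.update p.1 continuous_const)
  rw [← integral_add
    (integrable_comp_orbitColoring (continuous_moveCost p.1 p.2) hf).integrableOn
    (integrable_comp_orbitColoring hcont hf).integrableOn]
  simp only [cost, Int.cast_add]

variable [SMulInvariantMeasure (FreeGroup α) X μ]

theorem energy_piecewise {f : X → A} (hf : Measurable f) {V : Set X} [∀ x, Decidable (x ∈ V)]
    (hV : MeasurableSet V) (hdisjoint : ∀ t : Letter α, Disjoint (gen t • V) V) (a : A) :
    energy (α := α) μ (V.piecewise (fun _ => a) f) = energy (α := α) μ f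
      + 2 * ∫ x in V, (moveCost (orbitColoring f x) (1 : FreeGroup α) a : ℝ) ∂μ := by
  let φ (t : Letter α) : X → ℝ :=
    V.indicator fun y => (𝟙[f (gen t • y) = a] - 𝟙[f (gen t • y) = f y] : ℝ)
  have hφ (t : Letter α) : Integrable (φ t) μ :=
    ((integrable_comp_orbitColoring (continuous_iverson_const (gen t) a) hf).sub
      (integrable_iverson_edge hf t)).indicator hV
  have hφ_smul (t : Letter α) : Integrable (fun x => φ (opp t) (gen t • x)) μ :=
    (measurePreserving_smul (gen t) μ).integrable_comp_of_integrable (hφ (opp t))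
  have hterm (t : Letter α) :
      μ.real {x | V.piecewise (fun _ => a) f (gen t • x) = V.piecewise (fun _ => a) f x}
        = μ.real {x | f (gen t • x) = f x} + ∫ x, φ t x ∂μ + ∫ x, φ (opp t) x ∂μ := by
    have hadd : Integrable (fun x => ((𝟙[f (gen t • x) = f x] : ℤ) : ℝ) + φ t x) μ :=
      (integrable_iverson_edge hf t).add (hφ t)
    rw [← integral_iverson_edge (measurable_const.piecewise hV hf), ← integral_iverson_edge hf,
      ← integral_smul_eq_self (φ (opp t)) (g := gen t),
      ← integral_add (integrable_iverson_edge hf t) (hφ t), ← integral_add hadd (hφ_smul t)]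
    exact integral_congr_ae (.of_forall fun x =>
      iverson_piecewise_eq_add_indicator f t (hdisjoint t) a x)
  have hmove : ∫ x in V, (moveCost (orbitColoring f x) (1 : FreeGroup α) a : ℝ) ∂μ
      = ∑ t, ∫ x, φ t x ∂μ := by
    rw [← integral_indicator hV, ← integral_finsetSum _ fun t _ => hφ t]
    congr 1 with x
    by_cases hx : x ∈ V <;> simp [φ, hx, moveCost, orbitColoring]
  simp_rw [hmove, energy, hterm, Finset.sum_add_distrib]
  rw [opp_bijective.sum_comp fun t => ∫ x, φ t x ∂μ]
  ring

variable [DecidableEq α]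

theorem exists_energy_eq_add_setIntegral_cost {Q : Set (FreeGroup α)} {U : Set X}
    (hU : MeasurableSet U) (hQ : Q.PairwiseDisjoint (· • U)) {l : List (FreeGroup α × A)}
    (hl : ∀ p ∈ l, p.1 ∈ Q ∧ ∀ t, gen t * p.1 ∈ Q) (f : Labeling μ A) :
    ∃ g : Labeling μ A,
      energy (α := α) μ g
          = energy (α := α) μ f + 2 * ∫ x in U, (cost (orbitColoring f x) l : ℝ) ∂μ ∧
      dist f g ≤ l.length * μ.real U := by
  classical
  induction l generalizing f with
  | nil => exact ⟨f, by simp [cost], by simp⟩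
  | cons p l ih =>
    rw [List.forall_mem_cons] at hl
    have hpU : MeasurableSet (p.1 • U) := hU.const_smul p.1
    have hdisjoint (t : Letter α) : Disjoint (gen t • p.1 • U) (p.1 • U) := by
      rw [smul_smul]
      refine hQ (hl.1.2 t) hl.1.1 fun h => one_notMem_branch t ?_
      exact mul_eq_right.1 h ▸ gen_mem_branch t
    let f₁ : Labeling μ A :=
      ⟨(p.1 • U).piecewise (fun _ => p.2) f, measurable_const.piecewise hpU f.measurable⟩
    obtain ⟨g, hg, hfg⟩ := ih hl.2 f₁
    refine ⟨g, ?_, ?_⟩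
    · have hcost : ∀ x ∈ U, (cost (orbitColoring f₁ x) l : ℝ)
          = cost (Function.update (orbitColoring f x) p.1 p.2) l := fun x hx =>
        congrArg _ (cost_eq_of_eqOn hl.2 (orbitColoring_piecewise_eqOn f hQ hl.1.1 p.2 hx))
      rw [hg, energy_piecewise f.measurable hpU hdisjoint, setIntegral_smul_moveCost,
        setIntegral_congr_fun hU hcost, add_assoc, ← mul_add,
        setIntegral_cost_cons f.measurable]
    · have hff₁ : dist f f₁ ≤ μ.real U := by
        rw [Labeling.dist_def, measureReal_def, measureReal_def, ← measure_smul μ p.1 U]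
        refine measureReal_mono fun x hx => ?_
        by_contra hxU
        exact hx (Set.piecewise_eq_of_notMem (p.1 • U) (fun _ => p.2) f hxU).symm
      grw [dist_triangle f f₁ g, hff₁, hfg]
      simp [add_mul, add_comm]

end Move

section Stability

open scoped Pointwise

theorem exists_finset_forall_moves_mem {α A : Type*} [Finite α] (l : List (FreeGroup α × A)) :
    ∃ Q : Finset (FreeGroup α), ∀ p ∈ l, p.1 ∈ Q ∧ ∀ t, gen t * p.1 ∈ Q := by
  classical
  have := Fintype.ofFinite α
  let R : Finset (FreeGroup α) := (l.map Prod.fst).toFinset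
  refine ⟨R ∪ Finset.univ.image gen * R, fun p hp => ?_⟩
  have hpR : p.1 ∈ R := List.mem_toFinset.2 (List.mem_map_of_mem hp)
  exact ⟨Finset.mem_union_left _ hpR, fun t => Finset.mem_union_right _
    (Finset.mul_mem_mul (Finset.mem_image_of_mem _ (Finset.mem_univ t)) hpR)⟩

variable {α X A : Type*} [Fintype α] [DecidableEq α] [MulAction (FreeGroup α) X]
  [MeasurableSpace X] [MeasurableConstSMul (FreeGroup α) X] {μ : Measure X} [IsFiniteMeasure μ]
  [MeasurableSpace A] [TopologicalSpace A] [DiscreteTopology A] [BorelSpace A] [Finite A]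
  [DecidableEq A]

theorem setIntegral_cost_le_neg_measureReal {f : X → A} (hf : Measurable f)
    {l : List (FreeGroup α × A)} {V : Set X} (hV : MeasurableSet V)
    (hcost : ∀ x ∈ V, cost (orbitColoring f x) l < 0) :
    ∫ x in V, (cost (orbitColoring f x) l : ℝ) ∂μ ≤ -μ.real V := by
  have hle : ∀ x ∈ V, (cost (orbitColoring f x) l : ℝ) ≤ -1 := fun x hx => by
    exact_mod_cast Int.le_sub_one_of_lt (hcost x hx)
  have hint := integrable_comp_orbitColoring (μ := μ) (continuous_cost l) hf
  refine (setIntegral_mono_on hint.integrableOn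
    (integrableOn_const (measure_ne_top _ _)) hV hle).trans_eq ?_
  simp

theorem ae_isStable_of_forall_mul_energy_le [MeasurableSpace.CountablySeparated X]
    [SMulInvariantMeasure (FreeGroup α) X μ] (hfree : IsAEFree (FreeGroup α) μ) {m : ℕ}
    {f : Labeling μ A} (hmin : ∀ g : Labeling μ A,
      m * energy (α := α) μ f ≤ m * energy (α := α) μ g + dist f g) :
    ∀ᵐ x ∂μ, IsStable m (orbitColoring (α := α) f x) := by
  refine ae_all_iff.2 fun l => ?_
  by_contra hneg
  rw [Filter.eventually_imp_distrib_left, Classical.not_imp] at hneg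
  obtain ⟨hl, hneg⟩ := hneg
  have hU : MeasurableSet {x | cost (orbitColoring f x) l < 0} :=
    measurable_comp_orbitColoring (continuous_cost l) f.measurable measurableSet_Iio
  have hU₀ : μ {x | cost (orbitColoring f x) l < 0} ≠ 0 := fun h₀ =>
    hneg ((measure_eq_zero_iff_ae_notMem.1 h₀).mono fun x hx => not_lt.1 hx)
  obtain ⟨Q, hQ⟩ := exists_finset_forall_moves_mem l
  obtain ⟨V, hVU, hV, hV₀, hdisjoint⟩ := hfree.exists_pairwiseDisjoint_smul hU hU₀ Q
  obtain ⟨g, henergy, hdist⟩ := exists_energy_eq_add_setIntegral_cost hV hdisjoint hQ f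
  have hdrop := setIntegral_cost_le_neg_measureReal (μ := μ) f.measurable hV hVU
  have hpos : 0 < μ.real V := ENNReal.toReal_pos hV₀ (measure_ne_top _ _)
  have hm : (0 : ℝ) < m := by
    refine Nat.cast_pos.2 (Nat.pos_of_ne_zero ?_)
    rintro rfl
    rw [List.length_eq_zero_iff.1 (Nat.le_zero.1 hl)] at hneg
    exact hneg (.of_forall fun _ => le_rfl)
  have hdist' : dist f g ≤ m * μ.real V := by
    grw [hdist, hl]
  have := hmin g
  nlinarith

end Stability

section MeanPotential

theorem continuous_iInf_sum_erase_branchPotential {α A : Type*} [Fintype α] [DecidableEq α]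
    [DecidableEq A] [TopologicalSpace A] [DiscreteTopology A] [Finite A] (n : ℕ) (s : Letter α) :
    Continuous fun c : FreeGroup α → A =>
      ⨅ a, ∑ r ∈ Finset.univ.erase s, branchPotential n c r a :=
  continuous_iInf_int fun a => continuous_finsetSum _ fun r _ => continuous_branchPotential n r a

variable {α X A : Type*} [Fintype α] [DecidableEq α] [MulAction (FreeGroup α) X]
  [MeasurableSpace X] [MeasurableConstSMul (FreeGroup α) X] {μ : Measure X} [DecidableEq A]

/-- The expected sum, over the branches at the root, of the minima of the branch potentials of depth
`n`. -/
noncomputable def meanPotential (μ : Measure X) (f : X → A) (n : ℕ) : ℝ :=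
  ∑ t : Letter α, ∫ x, ((⨅ a, branchPotential n (orbitColoring f x) t a : ℤ) : ℝ) ∂μ

variable [MeasurableSpace A] [TopologicalSpace A] [DiscreteTopology A] [BorelSpace A]

theorem integrable_iInf_branchPotential [IsFiniteMeasure μ] [Finite A] {f : X → A}
    (hf : Measurable f) (n : ℕ) (t : Letter α) :
    Integrable (fun x => ((⨅ a, branchPotential n (orbitColoring f x) t a : ℤ) : ℝ)) μ :=
  integrable_comp_orbitColoring (continuous_iInf_int fun a => continuous_branchPotential n t a) hf

theorem neg_card_le_meanPotential [Finite A] [IsProbabilityMeasure μ] {f : X → A}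
    (hf : Measurable f) {n : ℕ} (hpotential : ∀ᵐ x ∂μ, ∀ t : Letter α,
      -1 ≤ ⨅ a, branchPotential n (orbitColoring f x) t a) :
    -(Fintype.card (Letter α) : ℝ) ≤ meanPotential (α := α) μ f n := by
  have hterm (t : Letter α) :
      -1 ≤ ∫ x, ((⨅ a, branchPotential n (orbitColoring f x) t a : ℤ) : ℝ) ∂μ := by
    have hle := integral_mono_ae (integrable_const (-1 : ℝ))
      (integrable_iInf_branchPotential (μ := μ) hf n t)
      (hpotential.mono fun x hx => by simpa using Int.cast_le (R := ℝ).2 (hx t))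
    simpa using hle
  simpa [meanPotential] using Finset.card_nsmul_le_sum Finset.univ _ _ fun t _ => hterm t

variable [IsFiniteMeasure μ] [SMulInvariantMeasure (FreeGroup α) X μ]

theorem integral_iInf_branchPotential_succ [Finite A] [Nontrivial A] {f : X → A}
    (hf : Measurable f) (n : ℕ) (t : Letter α) :
    ∫ x, ((⨅ a, branchPotential (n + 1) (orbitColoring f x) t a : ℤ) : ℝ) ∂μ
      = ∫ x, ((⨅ a, ∑ r ∈ Finset.univ.erase (opp t),
            branchPotential n (orbitColoring f x) r a : ℤ) : ℝ) ∂μ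
        - μ.real {x | f (gen t • x) = f x} := by
  let S (x : X) : ℝ :=
    (⨅ a, ∑ r ∈ Finset.univ.erase (opp t), branchPotential n (orbitColoring f x) r a : ℤ)
  have hS : Integrable S μ :=
    integrable_comp_orbitColoring (continuous_iInf_sum_erase_branchPotential n (opp t)) hf
  have hS_smul : Integrable (fun x => S (gen t • x)) μ :=
    (measurePreserving_smul (gen t) μ).integrable_comp_of_integrable hS
  change _ = ∫ x, S x ∂μ - _
  rw [← integral_smul_eq_self S (g := gen t), ← integral_iverson_edge hf,
    ← integral_sub hS_smul (integrable_iverson_edge hf t)]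
  simp [S, iInf_branchPotential_succ, orbitColoring_smul, orbitColoring]

variable [Fintype A]

theorem meanPotential_succ_le [Nonempty α] (hcard : Fintype.card α < Fintype.card A) {f : X → A}
    (hf : Measurable f) (n : ℕ) :
    meanPotential (α := α) μ f (n + 1)
      ≤ meanPotential (α := α) μ f n - energy (α := α) μ f := by
  have hα : 1 ≤ Fintype.card α := Fintype.card_pos
  have : Nontrivial A := Fintype.one_lt_card_iff_nontrivial.1 (hα.trans_lt hcard)
  let S (s : Letter α) (x : X) : ℝ :=
    (⨅ a, ∑ r ∈ Finset.univ.erase s, branchPotential n (orbitColoring f x) r a : ℤ)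
  have hS (s) : Integrable (S s) μ :=
    integrable_comp_orbitColoring (continuous_iInf_sum_erase_branchPotential n s) hf
  simp_rw [meanPotential, energy, integral_iInf_branchPotential_succ hf, Finset.sum_sub_distrib]
  refine sub_le_sub_right ?_ _
  rw [opp_bijective.sum_comp fun s => ∫ x, S s x ∂μ, ← integral_finsetSum _ fun s _ => hS s,
    ← integral_finsetSum _ fun t _ => integrable_iInf_branchPotential hf n t]
  refine integral_mono (integrable_finsetSum _ fun s _ => hS s)
    (integrable_finsetSum _ fun t _ => integrable_iInf_branchPotential hf n t) fun x => ?_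
  simp only [S]
  exact_mod_cast sum_iInf_sum_erase_branchPotential_le hcard n (orbitColoring f x)

theorem meanPotential_le_neg_mul_energy [Nonempty α] (hcard : Fintype.card α < Fintype.card A)
    {f : X → A} (hf : Measurable f) (n : ℕ) :
    meanPotential (α := α) μ f n ≤ -(n * energy (α := α) μ f) := by
  induction n with
  | zero =>
    simp only [meanPotential, Nat.cast_zero, zero_mul, neg_zero]
    refine Finset.sum_nonpos fun t _ => integral_nonpos fun x => ?_
    have := (Finite.ciInf_le _ _).trans
      (branchPotential_root_nonpos 0 (orbitColoring (α := α) f x) t)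
    exact Int.cast_nonpos.2 this
  | succ n ih =>
    push_cast
    linarith [meanPotential_succ_le (μ := μ) hcard hf n]

end MeanPotential

section NearlyProper

variable {α X A : Type*} [Fintype α] [MulAction (FreeGroup α) X] [MeasurableSpace X]
  [MeasurableSpace.CountablySeparated X] [MeasurableConstSMul (FreeGroup α) X] {μ : Measure X}
  [IsProbabilityMeasure μ] [SMulInvariantMeasure (FreeGroup α) X μ] [Fintype A]
  [MeasurableSpace A] [TopologicalSpace A] [DiscreteTopology A] [BorelSpace A]

theorem exists_mul_energy_le_card [Nonempty α] (hcard : Fintype.card α < Fintype.card A)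
    (hfree : IsAEFree (FreeGroup α) μ) (n : ℕ) :
    ∃ f : Labeling μ A, n * energy (α := α) μ f ≤ Fintype.card (Letter α) := by
  classical
  have : Nonempty A := Fintype.card_pos_iff.1 (Nat.zero_lt_of_lt hcard)
  obtain ⟨m, hm⟩ := exists_forall_isStable_neg_one_le_iInf (α := α) (A := A) n
  have hbdd : BddBelow (Set.range fun f : Labeling μ A => m * energy (α := α) μ f) :=
    ⟨0, Set.forall_mem_range.2 fun f => mul_nonneg m.cast_nonneg (energy_nonneg _)⟩
  let f₀ : Labeling μ A := ⟨fun _ => Classical.arbitrary A, measurable_const⟩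
  obtain ⟨f, -, hf⟩ := exists_forall_le_add_dist
    (continuous_energy.const_mul (m : ℝ)).lowerSemicontinuous hbdd f₀
  have hlower := neg_card_le_meanPotential f.measurable
    ((ae_isStable_of_forall_mul_energy_le hfree hf).mono fun x hx => hm _ hx)
  have hupper := meanPotential_le_neg_mul_energy (μ := μ) hcard f.measurable n
  exact ⟨f, by linarith⟩

theorem exists_energy_lt (hcard : Fintype.card α < Fintype.card A)
    (hfree : IsAEFree (FreeGroup α) μ) {δ : ℝ} (hδ : 0 < δ) :
    ∃ f : Labeling μ A, energy (α := α) μ f < δ := by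
  rcases isEmpty_or_nonempty α with hα | hα
  · have : Nonempty A := Fintype.card_pos_iff.1 (Nat.zero_lt_of_lt hcard)
    exact ⟨⟨fun _ => Classical.arbitrary A, measurable_const⟩, by simpa [energy]⟩
  · obtain ⟨n, hn⟩ := exists_nat_gt (Fintype.card (Letter α) / δ)
    obtain ⟨f, hf⟩ := exists_mul_energy_le_card hcard hfree n
    rw [div_lt_iff₀ hδ] at hn
    exact ⟨f, lt_of_mul_lt_mul_left (hf.trans_lt hn) n.cast_nonneg⟩

end NearlyProper

section TokenDensity

theorem integral_card_filter {ι X : Type*} [Fintype ι] [MeasurableSpace X] {μ : Measure X}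
    [IsFiniteMeasure μ] {P : ι → X → Prop} [∀ x, DecidablePred fun i => P i x]
    (hP : ∀ i, MeasurableSet {x | P i x}) :
    ∫ x, (Finset.card {i | P i x} : ℝ) ∂μ = ∑ i, μ.real {x | P i x} := by
  simp_rw [Finset.card_filter, Nat.cast_sum, ← integral_indicator_one (hP _)]
  rw [← integral_finsetSum _ fun i _ => (integrable_const 1).indicator (hP i)]
  simp [Set.indicator_apply]

theorem integrable_card_filter {ι X : Type*} [Fintype ι] [MeasurableSpace X] {μ : Measure X}
    [IsFiniteMeasure μ] {P : ι → X → Prop} [∀ x, DecidablePred fun i => P i x]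
    (hP : ∀ i, MeasurableSet {x | P i x}) :
    Integrable (fun x => (Finset.card {i | P i x} : ℝ)) μ := by
  have hsum : Integrable (fun x => ∑ i, {x | P i x}.indicator (fun _ => (1 : ℝ)) x) μ :=
    integrable_finsetSum _ fun i _ => (integrable_const 1).indicator (hP i)
  exact hsum.congr (.of_forall fun x => by simp [Set.indicator_apply])

theorem isOpen_hasToken {α A : Type*} [Fintype α] [DecidableEq α] [DecidableEq A]
    [TopologicalSpace A] [DiscreteTopology A] (k : ℕ) (t : Letter α) :
    IsOpen {c : FreeGroup α → A | HasToken k c t} := by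
  simp only [HasToken, Set.ofPred_exists]
  refine isOpen_iUnion fun l => isOpen_const.and (isOpen_const.and (.and ?_ ?_))
  · exact (isOpen_discrete (Set.Iic (0 : ℤ))).preimage (continuous_cost l)
  · exact (isOpen_discrete {p : A × A | p.1 = p.2}).preimage
      (((continuous_apply (gen t)).comp (continuous_recolor l)).prodMk (continuous_apply 1))

variable {α X A : Type*} [Fintype α] [DecidableEq α] [MulAction (FreeGroup α) X]
  [MeasurableSpace X] {μ : Measure X} [DecidableEq A]

/-- The expected number of edges at the root that carry a token. -/
noncomputable def tokenDensity (μ : Measure X) (f : X → A) (k : ℕ) : ℝ :=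
  ∑ t : Letter α, μ.real {x | HasToken k (orbitColoring f x) t}

theorem tokenDensity_zero (f : X → A) :
    tokenDensity (α := α) μ f 0 = energy (α := α) μ f := by
  simp [tokenDensity, energy, hasToken_zero_iff, orbitColoring]

variable [MeasurableConstSMul (FreeGroup α) X] [MeasurableSpace A] [TopologicalSpace A]
  [DiscreteTopology A] [BorelSpace A]

theorem measurableSet_hasToken [Countable A] {f : X → A} (hf : Measurable f) (k : ℕ)
    (t : Letter α) : MeasurableSet {x | HasToken k (orbitColoring f x) t} :=
  measurable_orbitColoring hf (isOpen_hasToken k t).measurableSet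

variable [Fintype A] {k : ℕ} {f : X → A}

theorem tokenDensity_le_one [IsProbabilityMeasure μ]
    (hcard : Fintype.card α < Fintype.card A) (hf : Measurable f)
    (hstable : ∀ᵐ x ∂μ, IsStable (2 * k + 1) (orbitColoring (α := α) f x)) :
    tokenDensity (α := α) μ f k ≤ 1 := by
  classical
  rw [tokenDensity, ← integral_card_filter (measurableSet_hasToken hf k)]
  refine (integral_mono_ae (integrable_card_filter (measurableSet_hasToken hf k))
    (integrable_const 1) (hstable.mono fun x hx => ?_)).trans_eq (by simp)
  exact Nat.cast_le_one.2 (hx.card_filter_hasToken_le_one hcard)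

variable [IsFiniteMeasure μ] [SMulInvariantMeasure (FreeGroup α) X μ]

theorem three_mul_tokenDensity_le (hcard : Fintype.card α + 2 ≤ Fintype.card A)
    (hf : Measurable f)
    (hstable : ∀ᵐ x ∂μ, IsStable (2 * k + 1) (orbitColoring (α := α) f x)) :
    3 * tokenDensity (α := α) μ f k ≤ tokenDensity (α := α) μ f (k + 1) := by
  classical
  have hpre (s : Letter α) : MeasurableSet
      {x : X | HasToken (k + 1) (translate (gen s) (orbitColoring (α := α) f x)) (opp s)} := by
    simp_rw [← orbitColoring_smul f (gen s)]
    exact measurable_const_smul (gen s) (measurableSet_hasToken hf (k + 1) (opp s))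
  have hpre_real (s : Letter α) :
      μ.real {x | HasToken (k + 1) (translate (gen s) (orbitColoring f x)) (opp s)}
        = μ.real {x | HasToken (k + 1) (orbitColoring (α := α) f x) (opp s)} := by
    simp_rw [← orbitColoring_smul f (gen s)]
    exact congrArg ENNReal.toReal
      (measure_preimage_smul μ (gen s) {x | HasToken (k + 1) (orbitColoring f x) (opp s)})
  have hshift : ∫ x, (Finset.card {s | HasToken (k + 1)
      (translate (gen s) (orbitColoring (α := α) f x)) (opp s)} : ℝ) ∂μ
        = tokenDensity (α := α) μ f (k + 1) := by
    simp_rw [integral_card_filter hpre, hpre_real, tokenDensity]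
    exact opp_bijective.sum_comp fun t => μ.real {x | HasToken (k + 1) (orbitColoring f x) t}
  rw [← hshift, tokenDensity, ← integral_card_filter (measurableSet_hasToken hf k),
    ← integral_const_mul]
  refine integral_mono_ae ((integrable_card_filter (measurableSet_hasToken hf k)).const_mul 3)
    (integrable_card_filter hpre) (hstable.mono fun x hx => ?_)
  beta_reduce
  exact_mod_cast hx.three_mul_card_filter_hasToken_le hcard

theorem three_pow_mul_energy_le_tokenDensity (hcard : Fintype.card α + 2 ≤ Fintype.card A)
    (hf : Measurable f)
    (hstable : ∀ᵐ x ∂μ, IsStable (2 * k + 1) (orbitColoring (α := α) f x)) :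
    3 ^ k * energy (α := α) μ f ≤ tokenDensity (α := α) μ f k := by
  induction k with
  | zero => simp [tokenDensity_zero]
  | succ k ih =>
    have hstable' := hstable.mono fun x => IsStable.mono (by lia : 2 * k + 1 ≤ _)
    have := three_mul_tokenDensity_le hcard hf hstable'
    rw [pow_succ]
    linarith [ih hstable']

end TokenDensity

section ProperLabeling

theorem mul_le_mul_add_of_mul_sqrt_le {m K a b d : ℝ} (hm : 0 ≤ m) (ha : 0 ≤ a) (hb : 0 ≤ b)
    (hd : 0 ≤ d) (hmK : m * √a ≤ K) (hab : 2 * K * √a ≤ 2 * K * √b + d) :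
    m * a ≤ m * b + d := by
  rcases le_total a b with hle | hle
  · nlinarith
  · have hsqrt := Real.sqrt_le_sqrt hle
    have hprod : m * (√a + √b) * (√a - √b) ≤ 2 * K * (√a - √b) := by
      refine mul_le_mul_of_nonneg_right ?_ (sub_nonneg.2 hsqrt)
      nlinarith
    nlinarith [Real.sq_sqrt ha, Real.sq_sqrt hb]

theorem sq_two_mul_add_three_le (k : ℕ) : (2 * k + 3) ^ 2 ≤ 9 * 3 ^ k := by
  induction k with
  | zero => norm_num
  | succ k ih =>
    rw [pow_succ 3 k]
    linarith [Nat.zero_le (k ^ 2), (by ring : (2 * (k + 1) + 3) ^ 2 = 4 * k ^ 2 + 20 * k + 25),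
      (by ring : (2 * k + 3) ^ 2 = 4 * k ^ 2 + 12 * k + 9)]

variable {α X A : Type*} [Fintype α] [MulAction (FreeGroup α) X] [MeasurableSpace X]
  [MeasurableSpace.CountablySeparated X] [MeasurableConstSMul (FreeGroup α) X] {μ : Measure X}
  [IsProbabilityMeasure μ] [SMulInvariantMeasure (FreeGroup α) X μ] [Fintype A]
  [MeasurableSpace A] [TopologicalSpace A] [DiscreteTopology A] [BorelSpace A]

theorem three_pow_mul_energy_le_one (hcard : Fintype.card α + 2 ≤ Fintype.card A)
    (hfree : IsAEFree (FreeGroup α) μ) {K : ℝ} {f : Labeling μ A}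
    (hmin : ∀ g : Labeling μ A, 2 * K * √(energy (α := α) μ f)
      ≤ 2 * K * √(energy (α := α) μ g) + dist f g) {k : ℕ}
    (hK : (2 * k + 1) * √(energy (α := α) μ f) ≤ K) :
    3 ^ k * energy (α := α) μ f ≤ 1 := by
  classical
  have hstable := ae_isStable_of_forall_mul_energy_le hfree (m := 2 * k + 1) fun g =>
    mul_le_mul_add_of_mul_sqrt_le (by positivity) (energy_nonneg _) (energy_nonneg _) dist_nonneg
      (by exact_mod_cast hK) (hmin g)
  exact (three_pow_mul_energy_le_tokenDensity hcard f.measurable hstable).trans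
    (tokenDensity_le_one (by lia) f.measurable hstable)

theorem exists_energy_eq_zero (hcard : Fintype.card α + 2 ≤ Fintype.card A)
    (hfree : IsAEFree (FreeGroup α) μ) (f : Labeling μ A) :
    ∃ g : Labeling μ A, energy (α := α) μ g = 0 ∧
      dist f g ≤ 2 * (Fintype.card α + 3) * √(energy (α := α) μ f) := by
  set K : ℝ := Fintype.card α + 3
  have hK₀ : 0 ≤ K := by positivity
  have hbdd : BddBelow (Set.range fun f : Labeling μ A => 2 * K * √(energy (α := α) μ f)) :=
    ⟨0, Set.forall_mem_range.2 fun f => by positivity⟩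
  obtain ⟨g, hdist, hmin⟩ := exists_forall_le_add_dist
    (continuous_energy.sqrt.const_mul (2 * K)).lowerSemicontinuous hbdd f
  have hK (k : ℕ) : (2 * k + 1) * √(energy (α := α) μ g) ≤ K := by
    induction k with
    | zero =>
      have henergy := energy_le_card (α := α) (μ := μ) g
      rw [Fintype.card_prod, Fintype.card_bool] at henergy
      have hsqrt : √(energy (α := α) μ g) ≤ K := Real.sqrt_le_iff.2 ⟨hK₀, by
        push_cast at henergy
        nlinarith⟩
      simpa using hsqrt
    | succ k ih =>
      have hsq : (2 * k + 3 : ℝ) ^ 2 ≤ 9 * 3 ^ k := by exact_mod_cast sq_two_mul_add_three_le k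
      have hsmall := three_pow_mul_energy_le_one hcard hfree hmin ih
      have hthree : (2 * k + 3) * √(energy (α := α) μ g) ≤ 3 := by
        rw [← sq_le_sq₀ (by positivity) (by norm_num), mul_pow, Real.sq_sqrt (energy_nonneg _)]
        nlinarith [energy_nonneg (α := α) (μ := μ) g]
      push_cast
      linarith [(Fintype.card α).cast_nonneg (α := ℝ)]
  refine ⟨g, ?_, by linarith [mul_nonneg hK₀ (Real.sqrt_nonneg (energy (α := α) μ g))]⟩
  by_contra hne
  have hpos := Real.sqrt_pos.2 ((energy_nonneg (α := α) (μ := μ) g).lt_of_ne' hne)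
  obtain ⟨k, hk⟩ := exists_nat_gt (K / √(energy (α := α) μ g))
  rw [div_lt_iff₀ hpos] at hk
  nlinarith [hK k, k.cast_nonneg (α := ℝ)]

end ProperLabeling

theorem exists_coloring_of_isAEFree {α X : Type*} [Fintype α] [MulAction (FreeGroup α) X]
    [MeasurableSpace X] [MeasurableSpace.CountablySeparated X]
    [MeasurableConstSMul (FreeGroup α) X] {μ : Measure X} [IsProbabilityMeasure μ]
    [SMulInvariantMeasure (FreeGroup α) X μ] (hfree : IsAEFree (FreeGroup α) μ) {n : ℕ}
    (hn : Fintype.card α ≤ n) {ε : ℝ} (hε : 0 < ε) :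
    ∃ f : X → Fin (n + 2), Measurable f ∧ (∀ᵐ x ∂μ, ∀ t : Letter α, f (gen t • x) ≠ f x) ∧
      μ {x | f x = Fin.last (n + 1)} < ENNReal.ofReal ε := by
  obtain ⟨f, hf⟩ := exists_energy_lt (A := Fin (n + 1)) (by simpa [Nat.lt_succ_iff]) hfree
    (show 0 < (ε / (2 * (Fintype.card α + 3))) ^ 2 by positivity)
  let f' : Labeling μ (Fin (n + 2)) :=
    ⟨fun x => (f x).castSucc, (Measurable.of_discrete).comp f.measurable⟩
  have henergy : energy (α := α) μ f' = energy (α := α) μ f := by simp [energy, f']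
  obtain ⟨g, hg, hdist⟩ := exists_energy_eq_zero (by simpa) hfree f'
  refine ⟨g, g.measurable, ae_ne_of_energy_eq_zero hg, ?_⟩
  have hsub : {x | g x = Fin.last (n + 1)} ⊆ {x | f' x ≠ g x} := fun x hx h =>
    (Fin.castSucc_lt_last (f x)).ne (h.trans hx)
  have hsqrt : √(energy (α := α) μ f') < ε / (2 * (Fintype.card α + 3)) := by
    rwa [henergy, Real.sqrt_lt' (by positivity)]
  rw [lt_div_iff₀' (by positivity)] at hsqrt
  rw [← ofReal_measureReal, ENNReal.ofReal_lt_ofReal_iff hε]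
  exact (measureReal_mono hsub).trans_lt (hdist.trans_lt hsqrt)

section Bernoulli

attribute [local instance] arrowAction

variable {G Ω : Type*} [Group G] [MeasurableSpace Ω]

instance : MeasurableConstSMul G (G → Ω) where
  measurable_const_smul g := measurable_pi_lambda _ fun h => measurable_pi_apply (g⁻¹ • h)

variable (ν : Measure Ω) [IsProbabilityMeasure ν]

instance : SMulInvariantMeasure G (G → Ω) (Measure.infinitePi fun _ => ν) where
  measure_preimage_smul g s hs := by
    rw [← Measure.map_apply (measurable_const_smul g) hs]
    exact congrArg (· s) (Measure.map_infinitePi_infinitePi_of_inj (P := fun _ => ν)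
      (mul_right_injective g⁻¹))

theorem isAEFree_infinitePi [MeasurableEq Ω] [NullSingletonClass ν] :
    IsAEFree G (Measure.infinitePi fun _ : G => ν) := fun g hg => by
  have hprod : ∀ᵐ p ∂ν.prod ν, p.1 ≠ p.2 :=
    (Measure.ae_prod_iff_ae_ae (measurableSet_eq_fun measurable_fst measurable_snd).compl).2
      (.of_forall fun a => (Measure.ae_ne ν a).mono fun _ => Ne.symm)
  rw [← Measure.infinitePi_map_eval_prod (P := fun _ : G => ν) hg] at hprod
  filter_upwards [ae_of_ae_map (by fun_prop) hprod] with x hx hfix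
  exact hx ((congrFun hfix g).symm.trans (congrArg x (inv_mul_cancel g)))

end Bernoulli

end TreeColoring

open TreeColoring in
attribute [local instance] arrowAction in
theorem bernoulli_shift_F3_five_coloring_general {α Ω : Type*} [Fintype α] {n : ℕ}
    (hn : Fintype.card α ≤ n) [MeasurableSpace Ω] [StandardBorelSpace Ω]
    (ν : Measure Ω) [IsProbabilityMeasure ν] [NullSingletonClass ν]
    (μ : Measure (FreeGroup α → Ω))
    (hμ : ∀ s : Finset (FreeGroup α),
      Measure.map (fun (x : FreeGroup α → Ω) (v : s) => x v) μ = Measure.pi fun _ : s => ν)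
    {ε : ℝ} (hε : 0 < ε) :
    ∃ f : (FreeGroup α → Ω) → Fin (n + 2),
      Measurable f ∧
      (∀ᵐ x ∂μ, ∀ s : FreeGroup α,
        (∃ i : α, s = FreeGroup.of i ∨ s = (FreeGroup.of i)⁻¹) →
          f (fun δ => x (s⁻¹ * δ)) ≠ f x) ∧
      μ {x | f x = Fin.last (n + 1)} < ENNReal.ofReal ε := by
  obtain rfl : μ = .infinitePi fun _ => ν :=
    (Measure.isProjectiveLimit_infinitePi fun _ => ν).unique hμ |>.symm
  obtain ⟨f, hf, hproper, hlast⟩ := exists_coloring_of_isAEFree (isAEFree_infinitePi ν) hn hε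
  refine ⟨f, hf, hproper.mono fun x hx s hs => ?_, hlast⟩
  obtain ⟨i, rfl | rfl⟩ := hs
  · exact hx (i, true)
  · exact hx (i, false)

/-- Bernoulli shift form: for every ε > 0 there is a measurable map
`f : (FreeGroup (Fin 3) → ℝ) → Fin 5` which is a.e. a proper coloring of the Schreier
graph of the shift (i.e. `f (s • x) ≠ f x` for every generator or inverse generator `s`)
and whose color class `4` has measure less than ε. Here μ is the product over the group
of Lebesgue measure on [0,1], characterized by its finite marginals, and
`(γ • x) δ = x (γ⁻¹ * δ)`. -/
theorem bernoulli_shift_F3_five_coloring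
    (μ : Measure (FreeGroup (Fin 3) → ℝ)) [IsProbabilityMeasure μ]
    (hμ : ∀ s : Finset (FreeGroup (Fin 3)),
      Measure.map (fun (x : FreeGroup (Fin 3) → ℝ) (v : s) => x v) μ
        = Measure.pi (fun _ : s => volume.restrict (Set.Icc (0:ℝ) 1)))
    (ε : ℝ) (hε : 0 < ε) :
    ∃ f : (FreeGroup (Fin 3) → ℝ) → Fin 5,
      Measurable f ∧
      (∀ᵐ x ∂μ, ∀ s : FreeGroup (Fin 3),
        (∃ i : Fin 3, s = FreeGroup.of i ∨ s = (FreeGroup.of i)⁻¹) →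
          f (fun δ => x (s⁻¹ * δ)) ≠ f x) ∧
      μ {x | f x = 4} < ENNReal.ofReal ε := by
  have : IsProbabilityMeasure (volume.restrict (Set.Icc (0 : ℝ) 1)) := ⟨by simp⟩
  exact bernoulli_shift_F3_five_coloring_general (n := 3) (by simp) _ μ hμ hε
end

section
/- For every ε > 0 there exists a measurable map f : X → Fin 4 such that μ({x : ∃ s ∈ S, f(s • x) = f(x)}) < ε. (The Bernoulli shift of F_3, equivalently the 6-regular tree, admits approximate measurable 4-colorings.) -/
open MeasureTheory

/-!
Among the measurable partial colourings that are proper where they are defined, consider one whose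
uncoloured set has almost the least possible measure. A vertex is *active* towards a neighbour if,
once the neighbour gives up its colour, the vertex can take that colour over while a recolouring of
its own branch of the tree saves a hole. If no recolouring around `x` saves a hole although `x` is
uncoloured or some neighbour is active towards it, then each of the other colours, of which there
are `k - 1`, or `k` if `x` is uncoloured, is blocked by a neighbour that is not active towards `x`,
and `x` is active towards every neighbour that is alone in blocking its colour. When `2 (k - 1)` is
at least the degree `2 r`, it follows that `x` sends out at least as much activity as it receives,
plus two units if it is uncoloured. By mass transport the total activity would grow without bound
with the depth of the recolourings, so the vertices that can be improved have measure bounded below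
in terms of the measure of the holes. Recolouring along a sparse set of such vertices with the same
surrounding pattern saves a definite amount of measure. Hence the holes have arbitrarily small
measure.
-/

namespace FreeGroupColoring

open Finset

variable {α κ X : Type*}

/-! ### Words and the tree -/

/-- A generator of `FreeGroup α` (second component `true`) or the inverse of one (`false`). -/
abbrev Letter (α : Type*) := α × Bool

/-- The letter of the inverse group element. -/
def Letter.inv (e : Letter α) : Letter α := (e.1, !e.2)

@[simp]
lemma Letter.inv_inv (e : Letter α) : e.inv.inv = e := by simp [Letter.inv]

/-- The group element of a letter. -/
def gen (e : Letter α) : FreeGroup α := FreeGroup.mk [e]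

@[simp]
lemma gen_inv (e : Letter α) : gen e.inv = (gen e)⁻¹ := by
  simp [gen, Letter.inv, FreeGroup.inv_mk, FreeGroup.invRev]

/-- The endpoint of the walk from `1` in the Cayley graph whose successive steps are left
multiplications by the letters of `l`. The first step is the rightmost factor. -/
def walk (l : List (Letter α)) : FreeGroup α := FreeGroup.mk l.reverse

@[simp]
lemma walk_nil : walk ([] : List (Letter α)) = 1 := rfl

lemma walk_cons (t : Letter α) (l : List (Letter α)) : walk (t :: l) = walk l * gen t := by
  simp [walk, gen]

lemma walk_concat (l : List (Letter α)) (t : Letter α) : walk (l ++ [t]) = gen t * walk l := by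
  simp [walk, gen]

/-- The walk `l` does not backtrack and its first step is not in `A`. These walks are the vertices
of the tree, or of the branches of the tree, rooted at their common starting point. -/
def IsReducedFrom : Finset (Letter α) → List (Letter α) → Prop
  | _, [] => True
  | A, t :: l => t ∉ A ∧ IsReducedFrom {t.inv} l

namespace IsReducedFrom

variable {A : Finset (Letter α)} {l l' : List (Letter α)}

lemma of_append (h : IsReducedFrom A (l ++ l')) : IsReducedFrom A l := by
  induction l generalizing A with
  | nil => trivial
  | cons t l ih => exact ⟨h.1, ih h.2⟩

lemma concat_concat {s t : Letter α} (h : IsReducedFrom A (l ++ [s])) (hst : t ≠ s.inv) :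
    IsReducedFrom A (l ++ [s] ++ [t]) := by
  induction l generalizing A with
  | nil => exact ⟨h.1, by simpa using hst, trivial⟩
  | cons a l ih => exact ⟨h.1, ih h.2⟩

lemma concat_or_eq_concat_inv (h : IsReducedFrom ∅ l) (e : Letter α) :
    IsReducedFrom ∅ (l ++ [e]) ∨ ∃ l', l = l' ++ [e.inv] := by
  rcases l.eq_nil_or_concat' with rfl | ⟨l', s, rfl⟩
  · exact .inl ⟨by simp, trivial⟩
  · by_cases hes : e = s.inv
    · exact .inr ⟨l', by rw [hes, s.inv_inv]⟩
    · exact .inl (h.concat_concat hes)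

lemma isReduced_reverse (h : IsReducedFrom A l) : FreeGroup.IsReduced l.reverse := by
  rw [FreeGroup.IsReduced, List.isChain_reverse]
  induction l generalizing A with
  | nil => exact .nil
  | cons s l ih =>
    cases l with
    | nil => exact .singleton s
    | cons t l =>
      refine .cons_cons (fun hts => ?_) (ih h.2)
      by_contra hne
      exact h.2.1 (Finset.mem_singleton.2 (Prod.ext hts (Bool.eq_not.2 hne)))

end IsReducedFrom

lemma walk_injOn : {l : List (Letter α) | IsReducedFrom ∅ l}.InjOn walk := by
  classical
  intro l hl l' hl' h
  have h_reduce := congrArg FreeGroup.toWord h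
  simp only [walk, FreeGroup.toWord_mk, hl.isReduced_reverse.reduce_eq,
    hl'.isReduced_reverse.reduce_eq] at h_reduce
  exact List.reverse_injective h_reduce

section Words

variable [Fintype α] [DecidableEq α]

/-- The vertices at distance at most `n` from the root in the branch avoiding `A`. -/
def words : ℕ → Finset (Letter α) → Finset (List (Letter α))
  | 0, _ => {[]}
  | n + 1, A => insert [] (Aᶜ.biUnion fun t => (words n {t.inv}).image (t :: ·))

lemma mem_words {n : ℕ} {A : Finset (Letter α)} {l : List (Letter α)} :
    l ∈ words n A ↔ IsReducedFrom A l ∧ l.length ≤ n := by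
  induction n generalizing A l with
  | zero => cases l <;> simp [words, IsReducedFrom]
  | succ n ih => cases l <;> simp [-Prod.exists, words, IsReducedFrom, ih, and_assoc]

lemma words_subset_succ (n : ℕ) (A : Finset (Letter α)) : words n A ⊆ words (n + 1) A := by
  intro l hl
  rw [mem_words] at hl ⊢
  exact ⟨hl.1, hl.2.trans n.le_succ⟩

/-- The number of uncoloured vertices of `words n A` under the partial colouring `c`. -/
def holes (n : ℕ) (A : Finset (Letter α)) (c : List (Letter α) → Option κ) : ℕ :=
  #{l ∈ words n A | c l = none}

lemma holes_succ (n : ℕ) (A : Finset (Letter α)) (c : List (Letter α) → Option κ) :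
    holes (n + 1) A c =
      (if c [] = none then 1 else 0) + ∑ t ∈ Aᶜ, holes n {t.inv} fun l => c (t :: l) := by
  simp only [holes, card_filter]
  rw [words, sum_insert (by simp), sum_biUnion]
  · exact congrArg _ (sum_congr rfl fun t _ => sum_image (by simp))
  · intro s _ t _ hst
    simp only [Function.onFun, disjoint_left, mem_image]
    rintro _ ⟨l, _, rfl⟩ ⟨l', _, h⟩
    exact hst (List.cons.inj h).1.symm

end Words

/-! ### Recolouring branches of the tree -/

section Recolouring

variable [MulAction (FreeGroup α) X] {f : X → Option κ} {n : ℕ} {A : Finset (Letter α)} {x : X}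
  {a : Option κ} {s : ℕ}

/-- A partial colouring of `X`, where `none` means uncoloured, is proper if neighbours in the
Schreier graph never carry the same colour. -/
def IsProper (α : Type*) [MulAction (FreeGroup α) X] (f : X → Option κ) : Prop :=
  ∀ x, ∀ e : Letter α, f x = f (gen e • x) → f x = none

/-- The partial colouring that `f` induces on the tree of reduced words rooted at `x`. -/
def treeView (f : X → Option κ) (x : X) (l : List (Letter α)) : Option κ := f (walk l • x)

@[simp]
lemma treeView_nil : treeView f x ([] : List (Letter α)) = f x := by simp [treeView]

lemma treeView_cons (f : X → Option κ) (x : X) (t : Letter α) (l : List (Letter α)) :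
    treeView f x (t :: l) = treeView f (gen t • x) l := by
  simp [treeView, walk_cons, mul_smul]

/-- `c` is a proper partial colouring of the branch at `x` avoiding `A` which differs from the one
induced by `f` only within distance `n` of the root. -/
structure IsRecolouring (f : X → Option κ) (n : ℕ) (A : Finset (Letter α)) (x : X)
    (c : List (Letter α) → Option κ) : Prop where
  proper : ∀ l t, IsReducedFrom A (l ++ [t]) → c l = c (l ++ [t]) → c l = none
  eq_treeView : ∀ l, IsReducedFrom A l → n < l.length → c l = treeView f x l

lemma IsProper.isRecolouring_treeView (hf : IsProper α f) :
    IsRecolouring f n A x (treeView f x) where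
  proper l t _ h := by
    simp only [treeView, walk_concat, mul_smul] at h ⊢
    exact hf _ _ h
  eq_treeView _ _ _ := rfl

/-- The colouring of a tree with root colour `a` and the colouring `d t` on the branch of the
neighbour `t` of the root. -/
def graft (a : Option κ) (d : Letter α → List (Letter α) → Option κ) :
    List (Letter α) → Option κ
  | [] => a
  | t :: l => d t l

lemma IsRecolouring.graft {d : Letter α → List (Letter α) → Option κ}
    (hd : ∀ t ∉ A, IsRecolouring f n {t.inv} (gen t • x) (d t))
    (ha : ∀ t ∉ A, a = d t [] → a = none) :
    IsRecolouring f (n + 1) A x (graft a d) where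
  proper
    | [], t, hl, h => ha t hl.1 h
    | s :: l, t, hl, h => (hd s hl.1).proper l t hl.2 h
  eq_treeView
    | s :: l, hl, hn => by
      rw [treeView_cons]
      exact (hd s hl.1).eq_treeView l hl.2 (Nat.succ_lt_succ_iff.1 hn)

variable [Fintype α] [DecidableEq α]

/-- The branch at `x` avoiding `A` can be recoloured up to depth `n` so that its root gets the
colour `a` and the number of uncoloured vertices drops by at least `s`. -/
def CanRecolour (f : X → Option κ) (n : ℕ) (A : Finset (Letter α)) (x : X) (a : Option κ)
    (s : ℕ) : Prop :=
  ∃ c, IsRecolouring f n A x c ∧ c [] = a ∧ holes n A c + s ≤ holes n A (treeView f x)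

lemma IsProper.canRecolour_self (hf : IsProper α f) : CanRecolour f n A x (f x) 0 :=
  ⟨treeView f x, hf.isRecolouring_treeView, treeView_nil, le_rfl⟩

lemma CanRecolour.succ {σ : Letter α → ℕ}
    (h : ∀ t ∉ A, ∃ b, (a = b → a = none) ∧ CanRecolour f n {t.inv} (gen t • x) b (σ t))
    (hs : (if a = none then 1 else 0) + s ≤ (if f x = none then 1 else 0) + ∑ t ∈ Aᶜ, σ t) :
    CanRecolour f (n + 1) A x a s := by
  choose! b hb d hd hdb hσ using h
  refine ⟨graft a d, .graft hd fun t ht => by rw [hdb t ht]; exact hb t ht, rfl, ?_⟩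
  have h_branches : ∑ t ∈ Aᶜ, holes n {t.inv} (d t) + ∑ t ∈ Aᶜ, σ t ≤
      ∑ t ∈ Aᶜ, holes n {t.inv} (treeView f (gen t • x)) := by
    rw [← sum_add_distrib]
    exact sum_le_sum fun t ht => hσ t (mem_compl.1 ht)
  simp only [holes_succ, treeView_cons, treeView_nil, graft]
  eta_reduce
  lia

/-! ### Active letters -/

/-- Suppose `P t` says that the neighbour in direction `t` can be uncoloured at no cost, or else
take the colour of `x` while saving a hole. Then, looking only at the directions outside `A`, the
vertex `x` can take the colour `a` while saving a hole. -/
def CanTake (f : X → Option κ) (P : Letter α → Prop) (A : Finset (Letter α)) (x : X)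
    (a : Option κ) : Prop :=
  (f x = none ∨ ∃ t ∉ A, P t) ∧ ∀ t ∉ A, ¬ P t → f (gen t • x) ≠ a

/-- The vertex `x` is active towards its neighbour `gen e • x` if a recolouring of depth less than
`n` of the branch at `x` away from that neighbour can give `x` the colour of the neighbour while
saving a hole. -/
def IsActive (f : X → Option κ) : ℕ → X → Letter α → Prop
  | 0, _, _ => False
  | n + 1, x, e => f (gen e • x) ≠ none ∧
      CanTake f (fun t => IsActive f n (gen t • x) t.inv) {e} x (f (gen e • x))

/-- Some colour can be given to `x` by a recolouring of depth at most `n` that saves a hole. -/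
def IsImprovable (α : Type*) [MulAction (FreeGroup α) X] (f : X → Option κ) (n : ℕ) (x : X) :
    Prop :=
  ∃ k : κ, f x ≠ k ∧ CanTake f (fun t : Letter α => IsActive f n (gen t • x) t.inv) ∅ x (some k)

lemma CanTake.canRecolour {P : Letter α → Prop} {k : κ} (hf : IsProper α f)
    (hP : ∀ t, P t → CanRecolour f n {t.inv} (gen t • x) none 0 ∧
      CanRecolour f n {t.inv} (gen t • x) (f x) 1)
    (hk : f x ≠ k) (h : CanTake f P A x (some k)) : CanRecolour f (n + 1) A x (some k) 1 := by
  have h_free (t) (ht : t ∉ A) :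
      ∃ b, (some k = b → some k = none) ∧ CanRecolour f n {t.inv} (gen t • x) b 0 := by
    by_cases hPt : P t
    · exact ⟨none, id, (hP t hPt).1⟩
    · exact ⟨f (gen t • x), fun hb => absurd hb.symm (h.2 t ht hPt), hf.canRecolour_self⟩
  rcases h.1 with hx | ⟨t₁, ht₁, hPt₁⟩
  · exact .succ h_free (by simp [hx])
  · refine .succ (σ := Pi.single t₁ 1) (fun t ht => ?_) (by simp [ht₁])
    rcases eq_or_ne t t₁ with rfl | hne
    · rw [Pi.single_eq_same]
      exact ⟨f x, fun hb => absurd hb.symm hk, (hP t hPt₁).2⟩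
    · rw [Pi.single_eq_of_ne hne]
      exact h_free t ht

lemma IsActive.canRecolour (hf : IsProper α f) {e : Letter α} (h : IsActive f n x e) :
    CanRecolour f n {e} x none 0 ∧ CanRecolour f n {e} x (f (gen e • x)) 1 := by
  induction n generalizing x e with
  | zero => exact h.elim
  | succ n ih =>
    obtain ⟨hne, h⟩ := h
    have h_nbr (t : Letter α) (ht : IsActive f n (gen t • x) t.inv) :
        CanRecolour f n {t.inv} (gen t • x) none 0 ∧
          CanRecolour f n {t.inv} (gen t • x) (f x) 1 := by
      simpa using ih ht
    obtain ⟨k, hk⟩ := Option.ne_none_iff_exists'.1 hne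
    constructor
    · rcases h.1 with hx | ⟨t₁, ht₁, hact⟩
      · exact hx ▸ hf.canRecolour_self
      · refine .succ (σ := Pi.single t₁ 1) (fun t _ => ?_) (by simp [ht₁])
        rcases eq_or_ne t t₁ with rfl | hne
        · exact ⟨f x, fun _ => rfl, by simpa using (h_nbr t hact).2⟩
        · exact ⟨_, fun _ => rfl, by simpa [hne] using hf.canRecolour_self⟩
    · rw [hk] at h ⊢
      exact h.canRecolour hf h_nbr fun hx => by simpa [hx] using hf x e (hx.trans hk.symm)

lemma IsImprovable.canRecolour (hf : IsProper α f) (h : IsImprovable α f n x) :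
    ∃ a, CanRecolour f (n + 1) (∅ : Finset (Letter α)) x a 1 := by
  obtain ⟨k, hk, h⟩ := h
  exact ⟨some k, h.canRecolour hf (fun t ht => by simpa using ht.canRecolour hf) hk⟩

end Recolouring

/-! ### The flow of activity -/

section Flow

lemma two_mul_card_le_card_add_card_unique {ι β : Type*} [DecidableEq ι] [DecidableEq β]
    {s : Finset ι} {T : Finset β} {φ : ι → β} (h : ∀ c ∈ T, ∃ e ∈ s, φ e = c) :
    2 * #T ≤ #s + #{e ∈ s | φ e ∈ T ∧ ∀ t ∈ s, φ t = φ e → t = e} := by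
  set U : Finset ι := {e ∈ s | ∀ t ∈ s, φ t = φ e → t = e}
  have h_fiber (c) (hc : c ∈ T) : 2 ≤ #{e ∈ s | φ e = c} + #{e ∈ U | φ e = c} := by
    obtain ⟨e, he, rfl⟩ := h c hc
    by_cases h_unique : ∀ t ∈ s, φ t = φ e → t = e
    · have h_pos (V : Finset ι) (he : e ∈ V) : 0 < #{t ∈ V | φ t = φ e} :=
        card_pos.2 ⟨e, mem_filter.2 ⟨he, rfl⟩⟩
      exact Nat.add_le_add (h_pos s he) (h_pos U (mem_filter.2 ⟨he, h_unique⟩))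
    · push Not at h_unique
      obtain ⟨t, ht, hte, hne⟩ := h_unique
      exact le_add_right (one_lt_card.2 ⟨t, by simp [ht, hte], e, by simp [he], hne⟩)
  calc 2 * #T ≤ ∑ c ∈ T, (#{e ∈ s | φ e = c} + #{e ∈ U | φ e = c}) := by
        rw [mul_comm]; exact card_nsmul_le_sum _ _ _ h_fiber
    _ = #{e ∈ s | φ e ∈ T} + #{e ∈ U | φ e ∈ T} := by
        rw [sum_add_distrib, sum_card_fiberwise_eq_card_filter, sum_card_fiberwise_eq_card_filter]
    _ ≤ _ := by
        gcongr
        · exact filter_subset _ _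
        · rw [filter_filter]; simp only [and_comm]; rfl

lemma two_mul_add_le_two_mul_card_compl_pair_none [Fintype κ] [DecidableEq κ] {r : ℕ}
    (hr : r < Fintype.card κ) (a : Option κ) [Decidable (a = none)] :
    2 * r + (if a = none then 2 else 0) ≤ 2 * #({none, a}ᶜ : Finset (Option κ)) := by
  rw [card_compl, Fintype.card_option]
  split_ifs with h
  · rw [h, pair_eq_singleton, card_singleton]
    lia
  · rw [card_pair (Ne.symm h)]
    lia

variable [MulAction (FreeGroup α) X] {f : X → Option κ} {n : ℕ} {x : X}

lemma exists_not_isActive_of_not_isImprovable (himp : ¬ IsImprovable α f n x)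
    (hx : f x = none ∨ ∃ t : Letter α, IsActive f n (gen t • x) t.inv) {c : Option κ}
    (hc : c ≠ none) (hcx : c ≠ f x) :
    ∃ t : Letter α, ¬ IsActive f n (gen t • x) t.inv ∧ f (gen t • x) = c := by
  obtain ⟨k, rfl⟩ := Option.ne_none_iff_exists'.1 hc
  by_contra! h
  exact himp ⟨k, hcx.symm, by simpa using hx, fun t _ => h t⟩

variable [Fintype α]

open Classical in
/-- The number of neighbours of `x` that are active towards `x`. -/
noncomputable def inflow (α : Type*) [Fintype α] [MulAction (FreeGroup α) X] (f : X → Option κ)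
    (n : ℕ) (x : X) : ℕ :=
  #{t : Letter α | IsActive f n (gen t • x) t.inv}

open Classical in
/-- The number of neighbours of `x` towards which `x` is active. -/
noncomputable def outflow (α : Type*) [Fintype α] [MulAction (FreeGroup α) X] (f : X → Option κ)
    (n : ℕ) (x : X) : ℕ :=
  #{e : Letter α | IsActive f n x e}

lemma card_letter : Fintype.card (Letter α) = 2 * Fintype.card α := by
  simp [mul_comm]

lemma inflow_le : inflow α f n x ≤ 2 * Fintype.card α :=
  card_letter (α := α) ▸ card_le_univ _

lemma outflow_le : outflow α f n x ≤ 2 * Fintype.card α :=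
  card_letter (α := α) ▸ card_le_univ _

/-- If `x` is uncoloured or receives activity, each colour other than that of `x` sits on some
neighbour that is not active towards `x`, and `x` passes activity to the neighbours that are alone
in carrying their colour. An uncoloured `x` has one more such colour, whence the term `2`. -/
lemma inflow_add_le_outflow_succ [Fintype κ] (hcard : Fintype.card α < Fintype.card κ)
    [Decidable (f x = none)] (himp : ¬ IsImprovable α f n x) :
    inflow α f n x + (if f x = none then 2 else 0) ≤ outflow α f (n + 1) x := by
  classical
  by_cases hx : f x = none ∨ ∃ t : Letter α, IsActive f n (gen t • x) t.inv
  swap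
  · push Not at hx
    simp [inflow, hx]
  set s : Finset (Letter α) := {t | ¬ IsActive f n (gen t • x) t.inv}
  set T : Finset (Option κ) := {none, f x}ᶜ
  have h_colours : 2 * Fintype.card α + (if f x = none then 2 else 0) ≤ 2 * #T :=
    two_mul_add_le_two_mul_card_compl_pair_none hcard (f x)
  have h_unique := two_mul_card_le_card_add_card_unique (s := s) (T := T)
    (φ := fun t => f (gen t • x)) fun c hc => by
      simp only [T, mem_compl, mem_insert, mem_singleton, not_or] at hc
      simpa [s] using exists_not_isActive_of_not_isImprovable himp hx hc.1 hc.2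
  have h_active : {e ∈ s | f (gen e • x) ∈ T ∧
      ∀ t ∈ s, f (gen t • x) = f (gen e • x) → t = e} ⊆
      ({e | IsActive f (n + 1) x e} : Finset (Letter α)) := by
    intro e he
    simp only [s, T, mem_filter, mem_univ, true_and, mem_compl, mem_insert, mem_singleton,
      not_or] at he ⊢
    obtain ⟨he, ⟨hne, -⟩, h_unique⟩ := he
    exact ⟨hne, hx.imp_right fun ⟨t, ht⟩ => ⟨t, by rw [mem_singleton]; rintro rfl; exact he ht, ht⟩,
      fun t ht hPt heq => ht (mem_singleton.2 (h_unique t hPt heq))⟩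
  have h_split : inflow α f n x + #s = 2 * Fintype.card α := by
    rw [← card_letter]
    exact card_filter_add_card_filter_not _
  have := card_le_card h_active
  rw [outflow]
  lia

end Flow

/-! ### Mass transport -/

local instance discreteMeasurableSpaceOption : MeasurableSpace (Option κ) := ⊤

section MassTransport

variable [MeasurableSpace X] [MulAction (FreeGroup α) X]
  [MeasurableConstSMul (FreeGroup α) X] {f : X → Option κ} {n : ℕ}

section Measurability

variable [Countable α] [Countable κ]

lemma measurable_canTake (hf : Measurable f) {P : X → Letter α → Prop}
    (hP : ∀ t, Measurable fun x => P x t) (A : Finset (Letter α)) {a : X → Option κ}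
    (ha : Measurable a) : Measurable fun x => CanTake f (P x) A x (a x) := by
  have h_eq {g h : X → Option κ} (hg : Measurable g) (hh : Measurable h) :
      Measurable fun x => g x = h x :=
    (Measurable.of_discrete (f := fun p : Option κ × Option κ => p.1 = p.2)).comp (hg.prodMk hh)
  refine .and (.or (h_eq hf measurable_const) (.exists fun t => .and measurable_const (hP t)))
    (.forall fun t => .imp measurable_const (.imp (hP t).not (.not ?_)))
  exact h_eq (hf.comp (measurable_const_smul _)) ha

lemma measurable_isActive (hf : Measurable f) (e : Letter α) :
    Measurable fun x => IsActive f n x e := by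
  induction n generalizing e with
  | zero => exact measurable_const
  | succ n ih =>
    have h_nbr : Measurable fun x => f (gen e • x) := hf.comp (measurable_const_smul _)
    have h_none : Measurable fun x => f (gen e • x) ≠ none :=
      (Measurable.of_discrete (f := fun c : Option κ => c ≠ none)).comp h_nbr
    exact h_none.and (measurable_canTake hf
      (fun t => (ih t.inv).comp (measurable_const_smul (gen t))) {e} h_nbr)

lemma measurableSet_isImprovable (hf : Measurable f) :
    MeasurableSet {x | IsImprovable α f n x} := by
  refine measurableSet_setOfPred.2 (.exists fun k => .and ?_ (measurable_canTake hf
    (fun t => (measurable_isActive hf t.inv).comp (measurable_const_smul (gen t))) ∅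
    measurable_const))
  exact (Measurable.of_discrete (f := fun c : Option κ => c ≠ k)).comp hf

end Measurability

lemma lintegral_card_filter {ι : Type*} [Fintype ι] (μ : Measure X) {p : X → ι → Prop}
    [∀ x, DecidablePred (p x)] (hp : ∀ i, Measurable fun x => p x i) :
    ∫⁻ x, (#{i | p x i} : ENNReal) ∂μ = ∑ i, μ {x | p x i} := by
  have h_indicator (x) : (#{i | p x i} : ENNReal) = ∑ i, {x | p x i}.indicator 1 x := by
    simp [Set.indicator_apply]
  simp_rw [h_indicator]
  rw [lintegral_finsetSum _ fun i _ => measurable_one.indicator (hp i).setOf]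
  exact sum_congr rfl fun i _ => lintegral_indicator_one (hp i).setOf

variable [Fintype α] (μ : Measure X) [SMulInvariantMeasure (FreeGroup α) X μ]

lemma lintegral_inflow [Countable κ] (hf : Measurable f) :
    ∫⁻ x, inflow α f n x ∂μ = ∫⁻ x, outflow α f n x ∂μ := by
  classical
  have h_inv : Function.Involutive (Letter.inv (α := α)) := Letter.inv_inv
  calc ∫⁻ x, inflow α f n x ∂μ
    _ = ∑ t : Letter α, μ ((gen t • ·) ⁻¹' {x | IsActive f n x t.inv}) :=
        lintegral_card_filter μ fun t =>
          (measurable_isActive hf t.inv).comp (measurable_const_smul (gen t))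
    _ = ∑ t : Letter α, μ {x | IsActive f n x t.inv} := by simp only [measure_preimage_smul]
    _ = ∑ e : Letter α, μ {x | IsActive f n x e} :=
        Equiv.sum_comp h_inv.toPerm fun e => μ {x | IsActive f n x e}
    _ = ∫⁻ x, outflow α f n x ∂μ := (lintegral_card_filter μ (measurable_isActive hf)).symm

lemma lintegral_outflow_add_le [Fintype κ] (hcard : Fintype.card α < Fintype.card κ)
    (hf : Measurable f) (n : ℕ) :
    ∫⁻ x, outflow α f n x ∂μ + 2 * μ (f ⁻¹' {none}) ≤
      ∫⁻ x, outflow α f (n + 1) x ∂μ +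
        (2 * Fintype.card α + 2 : ℕ) * μ {x | IsImprovable α f n x} := by
  classical
  have h_none : MeasurableSet (f ⁻¹' {none}) := hf .of_discrete
  have h_imp := measurableSet_isImprovable (α := α) (n := n) hf
  rw [← lintegral_inflow μ hf, ← lintegral_indicator_const h_none,
    ← lintegral_indicator_const h_imp, ← lintegral_add_right _ (measurable_const.indicator h_none),
    ← lintegral_add_right _ (measurable_const.indicator h_imp)]
  refine lintegral_mono fun x => ?_
  by_cases hx : IsImprovable α f n x
  · have h_le : inflow α f n x + (if f x = none then 2 else 0) ≤
        outflow α f (n + 1) x + (2 * Fintype.card α + 2) := by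
      have := inflow_le (α := α) (f := f) (n := n) (x := x)
      split_ifs <;> lia
    simpa [Set.indicator_apply, hx] using Nat.cast_le (α := ENNReal).2 h_le
  · simpa [Set.indicator_apply, hx] using
      Nat.cast_le (α := ENNReal).2 (inflow_add_le_outflow_succ hcard hx)

lemma mul_measure_none_le [Fintype κ] (hcard : Fintype.card α < Fintype.card κ)
    (hf : Measurable f) (N : ℕ) :
    N * (2 * μ (f ⁻¹' {none})) ≤ (2 * Fintype.card α : ℕ) * μ Set.univ +
      (2 * Fintype.card α + 2 : ℕ) * ∑ n ∈ range N, μ {x | IsImprovable α f n x} := by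
  have h_telescope : N * (2 * μ (f ⁻¹' {none})) ≤ ∫⁻ x, outflow α f N x ∂μ +
      (2 * Fintype.card α + 2 : ℕ) * ∑ n ∈ range N, μ {x | IsImprovable α f n x} := by
    induction N with
    | zero => simp
    | succ N ih =>
      rw [sum_range_succ]
      calc _ = N * (2 * μ (f ⁻¹' {none})) + 2 * μ (f ⁻¹' {none}) := by push_cast; ring
        _ ≤ _ := add_le_add_left ih _
        _ = ∫⁻ x, outflow α f N x ∂μ + 2 * μ (f ⁻¹' {none}) +
            (2 * Fintype.card α + 2 : ℕ) * ∑ n ∈ range N, μ {x | IsImprovable α f n x} := by ring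
        _ ≤ _ := add_le_add_left (lintegral_outflow_add_le μ hcard hf N) _
        _ = _ := by ring
  refine h_telescope.trans ?_
  gcongr
  calc ∫⁻ x, outflow α f N x ∂μ ≤ ∫⁻ _, (2 * Fintype.card α : ℕ) ∂μ :=
        lintegral_mono fun x => Nat.cast_le.2 outflow_le
    _ = (2 * Fintype.card α : ℕ) * μ Set.univ := by simp

lemma exists_le_measureReal_isImprovable [Fintype κ] [IsFiniteMeasure μ]
    (hcard : Fintype.card α < Fintype.card κ) {δ : ℝ} (hδ : 0 < δ) :
    ∃ N : ℕ, ∃ b > 0, ∀ f : X → Option κ, Measurable f → δ ≤ μ.real (f ⁻¹' {none}) →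
      ∃ n < N, b ≤ μ.real {x | IsImprovable α f n x} := by
  obtain ⟨N, hN⟩ := exists_nat_gt (2 * Fintype.card α * μ.real Set.univ / δ)
  rw [div_lt_iff₀ hδ] at hN
  refine ⟨N, δ / (2 * Fintype.card α + 2), by positivity, fun f hf hfδ => ?_⟩
  by_contra! h
  have h_flow : N * (2 * μ.real (f ⁻¹' {none})) ≤ 2 * Fintype.card α * μ.real Set.univ +
      (2 * Fintype.card α + 2) * ∑ n ∈ range N, μ.real {x | IsImprovable α f n x} := by
    have h_ne_top : ∑ n ∈ range N, μ {x | IsImprovable α f n x} ≠ ⊤ := by simp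
    have := ENNReal.toReal_mono (by finiteness) (mul_measure_none_le μ hcard hf N)
    rw [ENNReal.toReal_add (by finiteness) (by finiteness)] at this
    simp only [ENNReal.toReal_mul, ENNReal.toReal_natCast,
      ENNReal.toReal_sum fun n _ => measure_ne_top μ {x | IsImprovable α f n x}] at this
    simpa [measureReal_def] using this
  have h_sum : ∑ n ∈ range N, μ.real {x | IsImprovable α f n x} ≤
      N * (δ / (2 * Fintype.card α + 2)) := by
    simpa using sum_le_card_nsmul (range N) _ _ fun n hn => (h n (mem_range.1 hn)).le
  rw [← mul_div_assoc, le_div_iff₀' (by positivity)] at h_sum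
  have h_none : N * δ ≤ N * μ.real (f ⁻¹' {none}) := by gcongr
  linarith

end MassTransport

/-! ### Sparse sets and patching -/

section Sparse

variable [MeasurableSpace X]

lemma exists_le_measureReal_inter_fiber {β : Type*} [Fintype β] [Nonempty β] (μ : Measure X)
    [IsFiniteMeasure μ] (p : X → β) {B : Set X} {b : ℝ} (hb : b ≤ μ.real B) :
    ∃ c, b / Fintype.card β ≤ μ.real (B ∩ p ⁻¹' {c}) := by
  have h_union : B ⊆ ⋃ c, B ∩ p ⁻¹' {c} := fun x hx => by simpa using hx
  have h_sum : ∑ _c : β, b / Fintype.card β ≤ ∑ c, μ.real (B ∩ p ⁻¹' {c}) :=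
    calc ∑ _c : β, b / Fintype.card β = b := by simp [mul_div_cancel₀]
      _ ≤ μ.real (⋃ c, B ∩ p ⁻¹' {c}) := hb.trans (measureReal_mono h_union)
      _ ≤ ∑ c, μ.real (B ∩ p ⁻¹' {c}) := measureReal_iUnion_fintype_le _
  obtain ⟨c, -, hc⟩ := exists_le_of_sum_le univ_nonempty h_sum
  exact ⟨c, hc⟩

variable {G : Type*} [Group G] [MulAction G X]

/-- `M` is disjoint from its translates by the nontrivial elements of `K`. -/
def IsSparse (K : Finset G) (M : Set X) : Prop :=
  ∀ γ ∈ K, γ ≠ 1 → ∀ x ∈ M, γ • x ∉ M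

/-- The points that `p` does not tell apart from all their translates by the nontrivial elements of
`K`. -/
def unseparated {β : Type*} (K : Finset G) (p : X → β) : Set X :=
  {x | ∃ γ ∈ K, γ ≠ 1 ∧ p (γ • x) = p x}

variable [MeasurableConstSMul G X]

lemma measurableSet_unseparated {β : Type*} [MeasurableSpace β] [DiscreteMeasurableSpace β]
    [Countable β] (K : Finset G) {p : X → β} (hp : Measurable p) :
    MeasurableSet (unseparated K p) := by
  have h_eq (γ : G) : MeasurableSet {x | p (γ • x) = p x} :=
    measurableSet_eq_fun (hp.comp (measurable_const_smul γ)) hp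
  convert K.measurableSet_biUnion fun γ _ => (MeasurableSet.const (γ ≠ 1)).inter (h_eq γ) using 1
  ext x
  simp [unseparated, and_left_comm]

variable [MeasurableSpace.CountablySeparated X] (μ : Measure X) [IsFiniteMeasure μ]

/-- By freeness, the first `N` coordinates of an injection into Cantor space tell almost every point
apart from finitely many translates as `N → ∞`. -/
lemma exists_measureReal_unseparated_lt (hfree : ∀ γ : G, γ ≠ 1 → ∀ᵐ x ∂μ, γ • x ≠ x)
    (K : Finset G) {ε : ℝ} (hε : 0 < ε) :
    ∃ (N : ℕ) (p : X → Fin N → Bool), Measurable p ∧ μ.real (unseparated K p) < ε := by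
  obtain ⟨φ, hφ, hφ_inj⟩ := MeasurableSpace.measurable_injection_nat_bool_of_countablySeparated X
  set p : ∀ N, X → Fin N → Bool := fun N x i => φ x i
  have hp (N) : Measurable (p N) := by fun_prop
  have h_anti : Antitone fun N => unseparated K (p N) := by
    rintro N N' hN x ⟨γ, hγ, hγ1, h⟩
    exact ⟨γ, hγ, hγ1, funext fun i => congrFun h (i.castLE hN)⟩
  have h_null : μ (⋂ N, unseparated K (p N)) = 0 := by
    have h_ae : ∀ᵐ x ∂μ, ∀ γ ∈ K, γ ≠ 1 → γ • x ≠ x :=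
      (K.eventually_all).2 fun γ _ => Filter.eventually_imp_distrib_left.2 (hfree γ)
    refine measure_mono_null ?_ (ae_iff.1 h_ae)
    intro x hx hfree_x
    have h_coord (γ : G) : ∃ i, γ ∈ K → γ ≠ 1 → φ (γ • x) i ≠ φ x i := by
      by_contra! h
      exact hfree_x γ (h 0).1 (h 0).2.1 (hφ_inj (funext fun i => (h i).2.2))
    choose i hi using h_coord
    obtain ⟨γ, hγ, hγ1, h⟩ := Set.mem_iInter.1 hx (K.sup i + 1)
    exact hi γ hγ hγ1 (congrFun h ⟨i γ, Nat.lt_succ_of_le (le_sup hγ)⟩)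
  have h_lim := tendsto_measure_iInter_atTop (μ := μ)
    (fun N => (measurableSet_unseparated K (hp N)).nullMeasurableSet) h_anti ⟨0, measure_ne_top _ _⟩
  rw [h_null] at h_lim
  obtain ⟨N, hN⟩ := (h_lim.eventually_lt_const (ENNReal.ofReal_pos.2 hε)).exists
  exact ⟨N, p N, hp N, (ENNReal.lt_ofReal_iff_toReal_lt (measure_ne_top _ _)).1 hN⟩

lemma exists_isSparse_subset (hfree : ∀ γ : G, γ ≠ 1 → ∀ᵐ x ∂μ, γ • x ≠ x) (K : Finset G)
    {b : ℝ} (hb : 0 < b) :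
    ∃ η > 0, ∀ B, MeasurableSet B → b ≤ μ.real B →
      ∃ M ⊆ B, MeasurableSet M ∧ IsSparse K M ∧ η ≤ μ.real M := by
  obtain ⟨N, p, hp, h_bad⟩ := exists_measureReal_unseparated_lt μ hfree K (half_pos hb)
  refine ⟨b / 2 / Fintype.card (Fin N → Bool), by positivity, fun B hB hbB => ?_⟩
  have h_diff : b / 2 ≤ μ.real (B \ unseparated K p) := by
    linarith [le_measureReal_sdiff (μ := μ) (s₁ := B) (s₂ := unseparated K p)]
  obtain ⟨c, hc⟩ := exists_le_measureReal_inter_fiber μ p h_diff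
  refine ⟨(B \ unseparated K p) ∩ p ⁻¹' {c}, fun x hx => hx.1.1,
    (hB.diff (measurableSet_unseparated K hp)).inter (hp (measurableSet_singleton c)),
    fun γ hγ hγ1 x hx hγx => ?_, hc⟩
  exact hx.1.2 ⟨γ, hγ, hγ1, hγx.2.trans hx.2.symm⟩

end Sparse

section Patch

variable {ι β : Type*} {W : Finset ι} {T : ι → Set X} {c : ι → β} {f : X → β}

open Classical in
/-- The function equal to `c l` on the tile `T l` for `l ∈ W`, and to `f` outside these tiles. It is
meant for disjoint tiles. -/
noncomputable def patch (W : Finset ι) (T : ι → Set X) (c : ι → β) (f : X → β) (y : X) : β :=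
  if h : ∃ l ∈ W, y ∈ T l then c h.choose else f y

lemma patch_of_mem (hT : (W : Set ι).PairwiseDisjoint T) {l : ι} (hl : l ∈ W) {y : X}
    (hy : y ∈ T l) : patch W T c f y = c l := by
  have h : ∃ l ∈ W, y ∈ T l := ⟨l, hl, hy⟩
  rw [patch, dif_pos h, hT.elim_set h.choose_spec.1 hl y h.choose_spec.2 hy]

lemma patch_of_notMem {y : X} (hy : ∀ l ∈ W, y ∉ T l) : patch W T c f y = f y := by
  rw [patch, dif_neg]
  push Not
  exact hy

lemma patch_preimage_singleton [DecidableEq β] (hT : (W : Set ι).PairwiseDisjoint T) (k : β) :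
    patch W T c f ⁻¹' {k} =
      (⋃ l ∈ {l ∈ W | c l = k}, T l) ∪ (f ⁻¹' {k} \ ⋃ l ∈ W, T l) := by
  ext y
  simp only [Set.mem_preimage, Set.mem_singleton_iff, Set.mem_union, Set.mem_iUnion, mem_filter,
    Set.mem_sdiff, exists_prop, not_exists, not_and]
  by_cases hy : ∃ l ∈ W, y ∈ T l
  · obtain ⟨l, hl, hy⟩ := hy
    have h_unique (l') (hl' : l' ∈ W) (hy' : y ∈ T l') : l' = l := hT.elim_set hl' hl y hy' hy
    rw [patch_of_mem hT hl hy]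
    grind
  · push Not at hy
    rw [patch_of_notMem hy]
    grind

variable [MeasurableSpace X]

lemma measurable_patch [MeasurableSpace β] [MeasurableSingletonClass β] [Countable β]
    (hT : (W : Set ι).PairwiseDisjoint T) (hT_meas : ∀ l, MeasurableSet (T l))
    (hf : Measurable f) : Measurable (patch W T c f) := by
  classical
  refine measurable_to_countable' fun k => ?_
  rw [patch_preimage_singleton hT]
  exact (Finset.measurableSet_biUnion _ fun l _ => hT_meas l).union
    ((hf (measurableSet_singleton k)).diff (W.measurableSet_biUnion fun l _ => hT_meas l))

lemma measureReal_patch_preimage_singleton [DecidableEq β] {μ : Measure X} [IsFiniteMeasure μ]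
    (hT : (W : Set ι).PairwiseDisjoint T) (hT_meas : ∀ l, MeasurableSet (T l)) {m : ℝ}
    (hm : ∀ l, μ.real (T l) = m) {k : β} :
    μ.real (patch W T c f ⁻¹' {k}) =
      #{l ∈ W | c l = k} * m + μ.real (f ⁻¹' {k} \ ⋃ l ∈ W, T l) := by
  have h_subset : {l ∈ W | c l = k} ⊆ W := filter_subset _ _
  have h_tiles : μ.real (⋃ l ∈ {l ∈ W | c l = k}, T l) = #{l ∈ W | c l = k} * m := by
    rw [measureReal_biUnion_finset (hT.subset (coe_subset.2 h_subset)) fun l _ => hT_meas l]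
    simp [hm]
  have h_disj : Disjoint (⋃ l ∈ {l ∈ W | c l = k}, T l) (f ⁻¹' {k} \ ⋃ l ∈ W, T l) :=
    Set.disjoint_sdiff_right.mono_left (Set.biUnion_subset_biUnion_left h_subset)
  rw [patch_preimage_singleton hT, ← h_tiles]
  exact measureReal_union' h_disj (Finset.measurableSet_biUnion _ fun l _ => hT_meas l)
    (measure_ne_top _ _)

end Patch

/-! ### Recolouring along a sparse set -/

section Surgery

open scoped Pointwise

variable [MulAction (FreeGroup α) X] [Fintype α] [DecidableEq α] {f : X → Option κ}
  {n : ℕ} {M : Set X}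

/-- The reduced words of length at most `n`: the ball of radius `n` in the tree. -/
abbrev ball (α : Type*) [Fintype α] [DecidableEq α] (n : ℕ) : Finset (List (Letter α)) := words n ∅

/-- The group elements that can move the root of one recoloured ball of radius `n` to the root of an
overlapping one. -/
def overlaps (α : Type*) [Fintype α] [DecidableEq α] (n : ℕ) : Finset (FreeGroup α) :=
  image₂ (fun l l' => (walk l')⁻¹ * walk l) (ball α n) (ball α n)

lemma IsSparse.pairwiseDisjoint_walk_smul (hM : IsSparse (overlaps α n) M) :
    (ball α n : Set (List (Letter α))).PairwiseDisjoint fun l => walk l • M := by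
  intro l hl l' hl' hne
  refine Set.disjoint_left.2 fun y hy hy' => ?_
  obtain ⟨x, hx, rfl⟩ := hy
  rw [Set.mem_smul_set_iff_inv_smul_mem, smul_smul] at hy'
  refine hM _ (mem_image₂_of_mem hl hl') (fun h => hne ?_) x hx hy'
  exact walk_injOn (mem_words.1 hl).1 (mem_words.1 hl').1 (inv_mul_eq_one.1 h).symm

lemma IsRecolouring.patch_walk_smul {x₀ : X} {c : List (Letter α) → Option κ}
    (hc : IsRecolouring f n ∅ x₀ c) (hM : IsSparse (overlaps α (n + 1)) M)
    (h_view : ∀ x ∈ M, ∀ l ∈ ball α (n + 1), treeView f x l = treeView f x₀ l) {x : X} (hx : x ∈ M)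
    {l : List (Letter α)} (hl : l ∈ ball α (n + 1)) :
    patch (ball α n) (fun l => walk l • M) c f (walk l • x) = c l := by
  have h_disj := hM.pairwiseDisjoint_walk_smul
  have h_subset : ball α n ⊆ ball α (n + 1) := words_subset_succ n ∅
  by_cases hln : l ∈ ball α n
  · exact patch_of_mem (h_disj.subset (coe_subset.2 h_subset)) hln (Set.smul_mem_smul_set hx)
  · have h_notMem (l') (hl' : l' ∈ ball α n) : walk l • x ∉ walk l' • M := fun h =>
      hln (h_disj.elim_set (h_subset hl') hl _ h (Set.smul_mem_smul_set hx) ▸ hl')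
    obtain ⟨hl_red, -⟩ := mem_words.1 hl
    have hnl : n < l.length := by simpa [mem_words, hl_red] using hln
    rw [patch_of_notMem h_notMem, hc.eq_treeView l hl_red hnl]
    exact h_view x hx l hl

lemma IsRecolouring.patch_walk_smul_eq_none {x₀ : X} {c : List (Letter α) → Option κ}
    (hc : IsRecolouring f n ∅ x₀ c) (hM : IsSparse (overlaps α (n + 1)) M)
    (h_view : ∀ x ∈ M, ∀ l ∈ ball α (n + 1), treeView f x l = treeView f x₀ l) {x : X} (hx : x ∈ M)
    {l : List (Letter α)} (hl : l ∈ ball α n) {e : Letter α}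
    (h : patch (ball α n) (fun l => walk l • M) c f (walk l • x) =
      patch (ball α n) (fun l => walk l • M) c f (gen e • walk l • x)) :
    patch (ball α n) (fun l => walk l • M) c f (walk l • x) = none := by
  have h_patch {l : List (Letter α)} (hl : l ∈ ball α (n + 1)) :
      patch (ball α n) (fun l => walk l • M) c f (walk l • x) = c l :=
    hc.patch_walk_smul hM h_view hx hl
  have hl' : l ∈ ball α (n + 1) := words_subset_succ n ∅ hl
  obtain ⟨hl_red, hl_len⟩ := mem_words.1 hl
  rw [← mul_smul, ← walk_concat, h_patch hl'] at h
  rw [h_patch hl']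
  rcases hl_red.concat_or_eq_concat_inv e with hle | ⟨l', rfl⟩
  · rw [h_patch (mem_words.2 ⟨hle, by simpa using hl_len⟩)] at h
    exact hc.proper l e hle h
  · have h_parent : l' ∈ ball α (n + 1) :=
      mem_words.2 ⟨hl_red.of_append, by rw [List.length_append] at hl_len; lia⟩
    rw [walk_concat, walk_concat, gen_inv, mul_inv_cancel_left, h_patch h_parent] at h
    rw [h]
    exact hc.proper l' e.inv hl_red h.symm

lemma IsProper.patch {x₀ : X} {c : List (Letter α) → Option κ}
    (hf : IsProper α f) (hM : IsSparse (overlaps α (n + 1)) M)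
    (h_view : ∀ x ∈ M, ∀ l ∈ ball α (n + 1), treeView f x l = treeView f x₀ l)
    (hc : IsRecolouring f n ∅ x₀ c) :
    IsProper α (patch (ball α n) (fun l => walk l • M) c f) := by
  intro y e h
  by_cases hy : ∃ l ∈ ball α n, y ∈ walk l • M
  · obtain ⟨l, hl, x, hx, rfl⟩ := hy
    exact hc.patch_walk_smul_eq_none hM h_view hx hl h
  by_cases hy' : ∃ l ∈ ball α n, gen e • y ∈ walk l • M
  · obtain ⟨l, hl, x, hx, hxy⟩ := hy'
    have hxy : walk l • x = gen e • y := hxy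
    have := hc.patch_walk_smul_eq_none hM h_view hx hl (e := e.inv) (by simp [hxy, h])
    rwa [hxy, ← h] at this
  push Not at hy hy'
  rw [patch_of_notMem hy, patch_of_notMem hy'] at h
  rw [patch_of_notMem hy]
  exact hf y e h

variable [MeasurableSpace X] [MeasurableConstSMul (FreeGroup α) X] (μ : Measure X)
  [IsFiniteMeasure μ] [SMulInvariantMeasure (FreeGroup α) X μ]

lemma CanRecolour.exists_isProper_measureReal_add_le [Countable κ] {x₀ : X} {a : Option κ}
    (h : CanRecolour f n (∅ : Finset (Letter α)) x₀ a 1) (hf : Measurable f)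
    (hf_proper : IsProper α f) (hM : MeasurableSet M) (hM_sparse : IsSparse (overlaps α (n + 1)) M)
    (h_view : ∀ x ∈ M, ∀ l ∈ ball α (n + 1), treeView f x l = treeView f x₀ l) :
    ∃ g : X → Option κ, Measurable g ∧ IsProper α g ∧
      μ.real (g ⁻¹' {none}) + μ.real M ≤ μ.real (f ⁻¹' {none}) := by
  classical
  obtain ⟨c, hc, -, h_holes⟩ := h
  have h_subset : ball α n ⊆ ball α (n + 1) := words_subset_succ n ∅
  have h_disj : (ball α n : Set (List (Letter α))).PairwiseDisjoint fun l => walk l • M :=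
    hM_sparse.pairwiseDisjoint_walk_smul.subset (coe_subset.2 h_subset)
  have h_meas (l : List (Letter α)) : MeasurableSet (walk l • M) := hM.const_smul _
  have h_real (l : List (Letter α)) : μ.real (walk l • M) = μ.real M := by
    simp [measureReal_def]
  have h_self : FreeGroupColoring.patch (ball α n) (fun l => walk l • M) (treeView f x₀) f = f := by
    funext y
    by_cases hy : ∃ l ∈ ball α n, y ∈ walk l • M
    · obtain ⟨l, hl, x, hx, rfl⟩ := hy
      rw [patch_of_mem h_disj hl (Set.smul_mem_smul_set hx)]
      exact (h_view x hx l (h_subset hl)).symm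
    · push Not at hy
      exact patch_of_notMem hy
  refine ⟨_, measurable_patch h_disj h_meas hf, hf_proper.patch hM_sparse h_view hc, ?_⟩
  nth_rewrite 2 [← h_self]
  rw [measureReal_patch_preimage_singleton h_disj h_meas h_real,
    measureReal_patch_preimage_singleton h_disj h_meas h_real, add_right_comm, ← add_one_mul]
  gcongr
  exact_mod_cast h_holes

end Surgery

section Vanishing

variable [MulAction (FreeGroup α) X] [MeasurableSpace X] [MeasurableSpace.CountablySeparated X]
  [MeasurableConstSMul (FreeGroup α) X] (μ : Measure X) [IsFiniteMeasure μ]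
  [SMulInvariantMeasure (FreeGroup α) X μ]

lemma exists_forall_isProper_measureReal_add_le [Finite α] [Finite κ]
    (hfree : ∀ γ : FreeGroup α, γ ≠ 1 → ∀ᵐ x ∂μ, γ • x ≠ x) (n : ℕ) {b : ℝ} (hb : 0 < b) :
    ∃ η > 0, ∀ f : X → Option κ, Measurable f → IsProper α f →
      b ≤ μ.real {x | IsImprovable α f n x} → ∃ g : X → Option κ, Measurable g ∧ IsProper α g ∧
        μ.real (g ⁻¹' {none}) + η ≤ μ.real (f ⁻¹' {none}) := by
  classical
  cases nonempty_fintype α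
  cases nonempty_fintype κ
  obtain ⟨η, hη, h_sparse⟩ := exists_isSparse_subset μ hfree (overlaps α (n + 2)) hb
  refine ⟨η / Fintype.card (ball α (n + 2) → Option κ), by positivity, fun f hf hf_proper hbf => ?_⟩
  obtain ⟨M, hM_sub, hM, hM_sparse, hηM⟩ := h_sparse _ (measurableSet_isImprovable hf) hbf
  set view : X → ball α (n + 2) → Option κ := fun x l => treeView f x l.1
  have h_view : Measurable view :=
    measurable_pi_lambda _ fun l => hf.comp (measurable_const_smul (walk l.1))
  obtain ⟨π, hπ⟩ := exists_le_measureReal_inter_fiber μ view hηM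
  have h_pos : 0 < μ.real (M ∩ view ⁻¹' {π}) := lt_of_lt_of_le (by positivity) hπ
  obtain ⟨x₀, hx₀⟩ : (M ∩ view ⁻¹' {π}).Nonempty := by
    by_contra! h
    simp [h] at h_pos
  obtain ⟨a, ha⟩ := (hM_sub hx₀.1 : IsImprovable α f n x₀).canRecolour hf_proper
  obtain ⟨g, hg, hg_proper, hgf⟩ := ha.exists_isProper_measureReal_add_le μ hf hf_proper
    (hM.inter (h_view (measurableSet_singleton π))) 
    (fun γ hγ hγ1 x hx h => hM_sparse γ hγ hγ1 x hx.1 h.1)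
    fun x hx l hl => congrFun (hx.2.trans hx₀.2.symm) ⟨l, hl⟩
  exact ⟨g, hg, hg_proper, by linarith⟩

lemma exists_isProper_measureReal_none_lt [Fintype α] [Fintype κ]
    (hfree : ∀ γ : FreeGroup α, γ ≠ 1 → ∀ᵐ x ∂μ, γ • x ≠ x)
    (hcard : Fintype.card α < Fintype.card κ) {ε : ℝ} (hε : 0 < ε) :
    ∃ f : X → Option κ, Measurable f ∧ IsProper α f ∧ μ.real (f ⁻¹' {none}) < ε := by
  by_contra! h
  obtain ⟨N, b, hb, h_imp⟩ := exists_le_measureReal_isImprovable (α := α) (κ := κ) μ hcard hε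
  choose η hη h_step using fun n =>
    exists_forall_isProper_measureReal_add_le (κ := κ) μ hfree n hb
  obtain ⟨η₀, hη₀_le, hη₀⟩ := (((range N).eventually_all.2 fun n _ =>
    Ioc_mem_nhdsGT (hη n)).and self_mem_nhdsWithin).exists
  set S : Set ℝ := {r | ∃ f : X → Option κ, Measurable f ∧ IsProper α f ∧ μ.real (f ⁻¹' {none}) = r}
  have hS : S.Nonempty := ⟨_, fun _ => none, measurable_const, fun _ _ _ => rfl, rfl⟩
  have hS_bdd : BddBelow S := ⟨0, by rintro _ ⟨f, -, -, rfl⟩; exact measureReal_nonneg⟩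
  obtain ⟨_, ⟨f, hf, hf_proper, rfl⟩, hf_lt⟩ := exists_lt_of_csInf_lt hS (lt_add_of_pos_right _ hη₀)
  obtain ⟨n, hn, hbn⟩ := h_imp f hf (h f hf hf_proper)
  obtain ⟨g, hg, hg_proper, hgf⟩ := h_step n f hf hf_proper hbn
  linarith [csInf_le hS_bdd ⟨g, hg, hg_proper, rfl⟩, (hη₀_le n (mem_range.2 hn)).2]

end Vanishing

/-! ### Total colourings -/

lemma exists_gen_eq_iff {s : FreeGroup α} :
    (∃ e : Letter α, gen e = s) ↔ ∃ i, s = .of i ∨ s = (.of i)⁻¹ := by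
  simp only [Prod.exists, Bool.exists_bool, eq_comm (b := s), exists_or]
  exact or_comm

section Total

variable [MulAction (FreeGroup α) X] [Fintype α] [MeasurableSpace X] (μ : Measure X)
  [SMulInvariantMeasure (FreeGroup α) X μ]

lemma measureReal_exists_gen_smul_mem_le (H : Set X) :
    μ.real {x | ∃ e : Letter α, gen e • x ∈ H} ≤ 2 * Fintype.card α * μ.real H :=
  calc μ.real {x | ∃ e : Letter α, gen e • x ∈ H}
    _ ≤ ∑ e : Letter α, μ.real ((gen e • ·) ⁻¹' H) := by
        rw [Set.ofPred_exists]
        exact measureReal_iUnion_fintype_le _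
    _ = 2 * Fintype.card α * μ.real H := by
        simp [measureReal_def, measure_preimage_smul, mul_comm]

lemma IsProper.measureReal_getD_gen_smul_eq_le [IsFiniteMeasure μ] {f : X → Option κ}
    (hf : IsProper α f) (k : κ) :
    μ.real {x | ∃ e : Letter α, (f (gen e • x)).getD k = (f x).getD k} ≤
      (2 * Fintype.card α + 1) * μ.real (f ⁻¹' {none}) := by
  have h_subset : {x | ∃ e : Letter α, (f (gen e • x)).getD k = (f x).getD k} ⊆
      {x | ∃ e : Letter α, gen e • x ∈ f ⁻¹' {none}} ∪ f ⁻¹' {none} := by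
    rintro x ⟨e, h⟩
    by_contra! hx
    obtain ⟨a, ha⟩ := Option.ne_none_iff_exists'.1 fun h => hx (.inr h)
    obtain ⟨b, hb⟩ := Option.ne_none_iff_exists'.1 fun h => hx (.inl ⟨e, h⟩)
    rw [ha, hb, Option.getD_some, Option.getD_some] at h
    exact hx (.inr (hf x e (by rw [ha, hb, h])))
  rw [add_one_mul]
  exact (measureReal_mono h_subset).trans ((measureReal_union_le _ _).trans
    (add_le_add_left (measureReal_exists_gen_smul_mem_le μ _) _))

end Total

/-! ### Bernoulli shifts -/

section Bernoulli

attribute [local instance] arrowAction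

lemma measurableConstSMul_arrow (G ι Ω : Type*) [Group G] [MulAction G ι] [MeasurableSpace Ω] :
    MeasurableConstSMul G (ι → Ω) where
  measurable_const_smul γ := measurable_pi_lambda _ fun i => measurable_pi_apply (γ⁻¹ • i)

variable {Ω : Type*} [MeasurableSpace Ω] (P : Measure Ω) [IsProbabilityMeasure P]

lemma smulInvariantMeasure_infinitePi (G ι : Type*) [Group G] [MulAction G ι] :
    SMulInvariantMeasure G (ι → Ω) (Measure.infinitePi fun _ => P) where
  measure_preimage_smul γ s hs := by
    rw [← Measure.map_apply ((measurableConstSMul_arrow G ι Ω).measurable_const_smul γ) hs]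
    exact congrArg (· s) (Measure.map_infinitePi_infinitePi_of_inj (P := fun _ => P)
      (MulAction.injective γ⁻¹))

variable [MeasurableEq Ω] [NullSingletonClass P]

lemma ae_infinitePi_apply_ne {ι : Type*} {i j : ι} (hij : i ≠ j) :
    ∀ᵐ x ∂Measure.infinitePi fun _ : ι => P, x i ≠ x j := by
  have h_diag : ∀ᵐ z ∂P.prod P, z.1 ≠ z.2 := by
    refine (Measure.ae_prod_iff_ae_ae measurableSet_diagonal.compl).2 ?_
    exact .of_forall fun a => (P.ae_ne a).mono fun _ => Ne.symm
  rw [← Measure.infinitePi_map_eval_prod (P := fun _ => P) hij] at h_diag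
  exact ae_of_ae_map (f := fun x : ι → Ω => (x i, x j)) (by fun_prop) h_diag

lemma ae_infinitePi_smul_ne {G : Type*} [Group G] {γ : G} (hγ : γ ≠ 1) :
    ∀ᵐ x : G → Ω ∂Measure.infinitePi fun _ => P, γ • x ≠ x := by
  filter_upwards [ae_infinitePi_apply_ne P (inv_ne_one.2 hγ)] with x hx h
  exact hx ((congrArg x (mul_one _)).symm.trans (congrFun h 1))

end Bernoulli

end FreeGroupColoring

open FreeGroupColoring

theorem bernoulli_shift_F3_approximate_four_coloring_general {α κ X : Type*} [Fintype α]
    [Fintype κ] [MeasurableSpace κ] [MeasurableSpace X] [MeasurableSpace.CountablySeparated X]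
    [MulAction (FreeGroup α) X] [MeasurableConstSMul (FreeGroup α) X] (μ : Measure X)
    [IsFiniteMeasure μ] [SMulInvariantMeasure (FreeGroup α) X μ]
    (hfree : ∀ γ : FreeGroup α, γ ≠ 1 → ∀ᵐ x ∂μ, γ • x ≠ x)
    (hcard : Fintype.card α < Fintype.card κ) {ε : ℝ} (hε : 0 < ε) :
    ∃ f : X → κ, Measurable f ∧
      μ {x | ∃ s : FreeGroup α, (∃ i, s = .of i ∨ s = (.of i)⁻¹) ∧ f (s • x) = f x} <
        ENNReal.ofReal ε := by
  obtain ⟨k⟩ : Nonempty κ := Fintype.card_pos_iff.1 (Nat.zero_lt_of_lt hcard)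
  obtain ⟨f, hf, hf_proper, hfε⟩ := exists_isProper_measureReal_none_lt μ hfree hcard
    (ε := ε / (2 * Fintype.card α + 1)) (by positivity)
  have h_getD : Measurable[⊤] fun a : Option κ => a.getD k := measurable_from_top
  refine ⟨fun x => (f x).getD k, h_getD.comp hf, ?_⟩
  simp only [← exists_gen_eq_iff, exists_exists_eq_and]
  rw [← ofReal_measureReal, ENNReal.ofReal_lt_ofReal_iff hε]
  exact (hf_proper.measureReal_getD_gen_smul_eq_le μ k).trans_lt
    ((lt_div_iff₀' (by positivity)).1 hfε)

/-- Approximate coloring of the Bernoulli shift of the free group of rank 3: for every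
ε > 0 there is a measurable map `f : (FreeGroup (Fin 3) → ℝ) → Fin 4` which is improper
(i.e. `f (s • x) = f x` for some generator or inverse generator `s`) only on a set of
measure less than ε. Here μ is the product over the group of Lebesgue measure on [0,1],
characterized by its finite marginals, and `(γ • x) δ = x (γ⁻¹ * δ)`. -/
theorem bernoulli_shift_F3_approximate_four_coloring
    (μ : Measure (FreeGroup (Fin 3) → ℝ)) [IsProbabilityMeasure μ]
    (hμ : ∀ s : Finset (FreeGroup (Fin 3)),
      Measure.map (fun (x : FreeGroup (Fin 3) → ℝ) (v : s) => x v) μ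
        = Measure.pi (fun _ : s => volume.restrict (Set.Icc (0:ℝ) 1)))
    (ε : ℝ) (hε : 0 < ε) :
    ∃ f : (FreeGroup (Fin 3) → ℝ) → Fin 4,
      Measurable f ∧
      μ {x | ∃ s : FreeGroup (Fin 3),
          (∃ i : Fin 3, s = FreeGroup.of i ∨ s = (FreeGroup.of i)⁻¹) ∧
          f (fun δ => x (s⁻¹ * δ)) = f x} < ENNReal.ofReal ε := by
  have : IsProbabilityMeasure (volume.restrict (Set.Icc (0 : ℝ) 1)) := ⟨by simp⟩
  obtain rfl : μ = Measure.infinitePi fun _ => volume.restrict (Set.Icc 0 1) :=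
    IsProjectiveLimit.unique hμ (Measure.isProjectiveLimit_infinitePi _)
  let : MulAction (FreeGroup (Fin 3)) (FreeGroup (Fin 3) → ℝ) := arrowAction
  have := measurableConstSMul_arrow (FreeGroup (Fin 3)) (FreeGroup (Fin 3)) ℝ
  have := smulInvariantMeasure_infinitePi (volume.restrict (Set.Icc (0 : ℝ) 1))
    (FreeGroup (Fin 3)) (FreeGroup (Fin 3))
  exact bernoulli_shift_F3_approximate_four_coloring_general _
    (fun _ hγ => ae_infinitePi_smul_ne _ hγ) (by simp) hε
end
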